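/- Let q be an odd prime power and fix signs ε1, ε2 ∈ {1, −1}. For each monic irreducible P ∈ F_q[X], let A_P denote the limit as M → ∞ of ∏_{Q monic irreducible, deg Q ≤ M} (1 + δ_P(Q)). Then there is a constant C, depending only on q, such that for all integers n ≥ 1 and M ≥ 1: the absolute value of [ (the sum of A_P over all monic irreducible P ∈ F_q[X] of degree n) minus π_q(n)·(1 − 1/q) ] is at most C·( q^{n − 2M}/n + q^{n/2}·M^3/n + q^n/(n·M·q^{M/2}) ). -/

import Mathlib

open Polynomial Classical

noncomputable section

/-- Quadratic residue symbol modulo `P`: 1 if `F` is a nonzero square mod `P`,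
-1 if a nonsquare, 0 if `P ∣ F`. -/
def chiP {Fq : Type*} [Field Fq] (P F : Fq[X]) : ℤ :=
  if P ∣ F then 0 else if ∃ G, P ∣ (F - G ^ 2) then 1 else -1

/-- `a_Q = (ε1^{deg Q} + ε2^{deg Q})·χ_P(Q)`. -/
def aQ {Fq : Type*} [Field Fq] (e1 e2 : ℤ) (P Q : Fq[X]) : ℤ :=
  (e1 ^ Q.natDegree + e2 ^ Q.natDegree) * chiP P Q

/-- `δ_P(Q) = a_Q·q^{-deg Q} - (1 + a_Q)·q^{-2·deg Q}`. -/
def deltaP {Fq : Type*} [Field Fq] (q : ℕ) (e1 e2 : ℤ) (P Q : Fq[X]) : ℝ :=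
  (aQ e1 e2 P Q : ℝ) * ((q : ℝ) ^ Q.natDegree)⁻¹ -
    (1 + (aQ e1 e2 P Q : ℝ)) * ((q : ℝ) ^ (2 * Q.natDegree))⁻¹

/-- `π_q(n)`: the number of monic irreducible polynomials of degree `n` over `F_q`. -/
def piq (Fq : Type*) [Field Fq] (n : ℕ) : ℕ :=
  {P : Fq[X] | P.Monic ∧ Irreducible P ∧ P.natDegree = n}.ncard

end

/-!
Dividing `1 + δ_P(Q)` by `1 - q^{-2 deg Q}` leaves `1 + v_P(Q)` with
`v_P(Q) = a_Q / (q^{deg Q} + 1)`, and the divisors multiply up to `1 / ζ(2) = 1 - 1/q`. So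
`A_P = (1 - 1/q) ∑_k c_k(P)`, where `c_k(P)` is the coefficient of `u^k` in
`∏_Q (1 + v_P(Q) u^{deg Q})`; since the product at `u = 1` converges only conditionally, its value
is identified with the sum of the series by Abel's theorem.

The coefficient `c_0(P) = 1` gives the main term, and the rest is `O(n² q^{n/2})`:
* for `0 < k < 4n` one sums over `P` first. Expanding `c_k(P)` into symbols `χ_P(f)` reduces the
  sum to character sums `∑_P χ_P(f)` over the primes of degree `n`, which are sums of a quadratic
  character over `F_{q^n}`, with square root cancellation by Stepanov's method;
* for `k ≥ 4n` one fixes `P`. Up to an absolutely convergent factor the Euler product is the product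
  of two `L`-polynomials of `χ_P` of degree `< n`, and Cauchy-type estimates on `|u| = q^{1/4}` win.

Finally `n² q^{n/2}` is dominated by the second stated error term if `n ≤ 2M`, and by the third one
otherwise.
-/

section Stepanov

theorem hasseDeriv_X_pow_primePow_eq_zero {R : Type*} [CommSemiring R] (p : ℕ) [Fact p.Prime]
    [CharP R p] {n k : ℕ} (hk0 : k ≠ 0) (hk : k < p ^ n) :
    hasseDeriv k (X ^ p ^ n : R[X]) = 0 := by
  have hchoose : ((p ^ n).choose k : R) = 0 :=
    (CharP.cast_eq_zero_iff R p _).2 ((Fact.out : p.Prime).dvd_choose_pow hk0 hk.ne)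
  rw [← monomial_one_right_eq_X_pow, hasseDeriv_monomial, hchoose, zero_mul, monomial_zero_right]

theorem hasseDeriv_mul_of_hasseDeriv_eq_zero {R : Type*} [CommSemiring R] {g : R[X]} {k : ℕ}
    (hg : ∀ i, i ≠ 0 → i ≤ k → hasseDeriv i g = 0) (h : R[X]) :
    hasseDeriv k (g * h) = g * hasseDeriv k h := by
  rw [hasseDeriv_mul, Finset.sum_eq_single_of_mem (0, k) (by simp), hasseDeriv_zero']
  rintro ⟨i, j⟩ hij hne
  rw [Finset.HasAntidiagonal.mem_antidiagonal] at hij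
  dsimp only at hij ⊢
  rw [hg i (by rintro rfl; simp_all) (by lia), zero_mul]

theorem pow_tsub_dvd_hasseDeriv_pow {R : Type*} [CommSemiring R] (f : R[X]) (N i : ℕ) :
    f ^ (N - i) ∣ hasseDeriv i (f ^ N) := by
  induction N generalizing i with
  | zero => simp
  | succ N ih =>
    rw [pow_succ f N, hasseDeriv_mul]
    refine Finset.dvd_sum fun ⟨a, b⟩ hab => ?_
    rw [Finset.HasAntidiagonal.mem_antidiagonal] at hab
    dsimp only at hab ⊢
    rcases Nat.eq_zero_or_pos b with rfl | hb
    · rw [hasseDeriv_zero']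
      refine (pow_dvd_pow f (show _ ≤ N - a + 1 by lia)).trans ?_
      rw [pow_succ]
      exact mul_dvd_mul_right (ih a) f
    · exact dvd_mul_of_dvd_left ((pow_dvd_pow f (by lia)).trans (ih a)) _

theorem pow_tsub_dvd_hasseDeriv_pow_mul {R : Type*} [CommSemiring R] (f r : R[X]) (N k : ℕ) :
    f ^ (N - k) ∣ hasseDeriv k (f ^ N * r) := by
  rw [hasseDeriv_mul]
  refine Finset.dvd_sum fun ⟨a, b⟩ hab => dvd_mul_of_dvd_left ?_ _
  rw [Finset.HasAntidiagonal.mem_antidiagonal] at hab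
  exact (pow_dvd_pow f (by lia)).trans (pow_tsub_dvd_hasseDeriv_pow f N a)

variable {K : Type*} [Field K]

theorem exists_linearMap_hasseDeriv_pow_mul_eq {f : K[X]} (hf : f ≠ 0) {N k : ℕ} (hk : k ≤ N) :
    ∃ T : K[X] →ₗ[K] K[X], (∀ r, hasseDeriv k (f ^ N * r) = f ^ (N - k) * T r) ∧
      ∀ r, (T r).natDegree ≤ r.natDegree + k * f.natDegree := by
  choose T hT using fun r => pow_tsub_dvd_hasseDeriv_pow_mul f r N k
  have hne : f ^ (N - k) ≠ 0 := pow_ne_zero _ hf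
  refine ⟨{ toFun := T, map_add' := fun r s => ?_, map_smul' := fun c r => ?_ }, hT, fun r => ?_⟩
  · apply mul_left_cancel₀ hne
    rw [← hT, mul_add, map_add, mul_add, ← hT, ← hT]
  · apply mul_left_cancel₀ hne
    rw [← hT, mul_smul_comm, map_smul, hT, RingHom.id_apply, mul_smul_comm]
  · change (T r).natDegree ≤ _
    by_cases h0 : T r = 0
    · simp [h0]
    have hdeg : (f ^ (N - k) * T r).natDegree ≤ N * f.natDegree + r.natDegree - k :=
      hT r ▸ (natDegree_hasseDeriv_le _ k).trans
        (Nat.sub_le_sub_right (natDegree_mul_le.trans (by rw [natDegree_pow])) k)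
    rw [natDegree_mul hne h0, natDegree_pow, Nat.sub_mul] at hdeg
    have := Nat.mul_le_mul_right f.natDegree hk
    lia

theorem eq_zero_of_sq_mul_eq_C_mul_sq {f : K[X]} (hf : Squarefree f) (hdeg : 0 < f.natDegree)
    {a : K} (ha : a ≠ 0) {r s : K[X]} (h : r ^ 2 * f = C a * s ^ 2) : r = 0 := by
  have hf0 : f ≠ 0 := hf.ne_zero
  have dvd_of_dvd_sq (t : K[X]) : f ∣ t ^ 2 → f ∣ t := (hf.dvd_pow_iff_dvd two_ne_zero).1
  induction hn : r.natDegree using Nat.strong_induction_on generalizing r s with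
  | _ n ih =>
    by_contra hr0
    obtain ⟨s, rfl⟩ : f ∣ s := dvd_of_dvd_sq s <|
      (isUnit_C.2 ha.isUnit).dvd_mul_left.1 (h ▸ dvd_mul_left f (r ^ 2))
    have hr2 : r ^ 2 = f * (C a * s ^ 2) := by
      apply mul_right_cancel₀ hf0
      rw [h]; ring
    obtain ⟨r, rfl⟩ : f ∣ r := dvd_of_dvd_sq r (hr2 ▸ dvd_mul_right f _)
    have hdescent : r ^ 2 * f = C a * s ^ 2 := by
      apply mul_left_cancel₀ hf0
      rw [← hr2]; ring
    have hr : r ≠ 0 := right_ne_zero_of_mul hr0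
    rw [natDegree_mul hf0 hr] at hn
    exact hr (ih r.natDegree (by lia) hdescent rfl)

theorem X_pow_dvd_of_X_pow_dvd_mul_pow {f s : K[X]} (hf : Squarefree f) (hX : X ∣ f) {m n : ℕ}
    (h : X ^ (m + n) ∣ s * f ^ m) : X ^ n ∣ s := by
  obtain ⟨g, rfl⟩ := hX
  have hg : ¬ X ∣ g := fun hXg => not_isUnit_X (hf X (mul_dvd_mul_left X hXg))
  rw [mul_pow, mul_left_comm, pow_add] at h
  exact ((irreducible_X.coprime_iff_not_dvd.2 hg).pow).dvd_of_dvd_mul_right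
    ((mul_dvd_mul_iff_left (pow_ne_zero m X_ne_zero)).1 h)

theorem X_sub_C_pow_dvd_of_eval_hasseDeriv_eq_zero {R : K[X]} {x : K} {l : ℕ}
    (h : ∀ k < l, (hasseDeriv k R).eval x = 0) : (X - C x) ^ l ∣ R := by
  rw [X_sub_C_pow_dvd_iff, ← taylor_apply, X_pow_dvd_iff]
  exact fun k hk => (taylor_coeff x R k).trans (h k hk)

theorem mul_card_le_natDegree_of_forall_X_sub_C_pow_dvd {R : K[X]} (hR : R ≠ 0) {S : Finset K}
    {l : ℕ} (h : ∀ x ∈ S, (X - C x) ^ l ∣ R) : l * S.card ≤ R.natDegree := by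
  have hprod : ∏ x ∈ S, (X - C x) ^ l ∣ R :=
    Finset.prod_dvd_of_coprime
      (fun x _ y _ hxy => (isCoprime_X_sub_C_of_isUnit_sub (sub_ne_zero.2 hxy).isUnit).pow) h
  have hdeg := natDegree_le_of_dvd hprod hR
  rw [natDegree_prod_of_monic S _ fun x _ => (monic_X_sub_C x).pow l] at hdeg
  simpa [mul_comm] using hdeg

theorem natDegree_lt_of_mem_degreeLT {B : ℕ} (hB : 0 < B) {r : K[X]} (hr : r ∈ degreeLT K B) :
    r.natDegree < B := by
  by_cases h0 : r = 0
  · simpa [h0] using hB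
  · exact (natDegree_lt_iff_degree_lt h0).2 (mem_degreeLT.1 hr)

theorem finrank_degreeLT (n : ℕ) : Module.finrank K (degreeLT K n) = n := by
  rw [(degreeLTEquiv K n).finrank_eq, Module.finrank_fin_fun]

theorem exists_ne_zero_forall_eq_zero_of_mul_lt_finrank {V : Type*} [AddCommGroup V] [Module K V]
    [Module.Finite K V] {l W : ℕ} (Φ : Fin l → V →ₗ[K] K[X]) (hΦ : ∀ k v, Φ k v ∈ degreeLT K W)
    (hdim : l * W < Module.finrank K V) : ∃ v ≠ 0, ∀ k, Φ k v = 0 := by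
  have : Module.Finite K (degreeLT K W) := Module.Finite.equiv (degreeLTEquiv K W).symm
  let Ψ : V →ₗ[K] Fin l → degreeLT K W := LinearMap.pi fun k => (Φ k).codRestrict _ (hΦ k)
  have hker : LinearMap.ker Ψ ≠ ⊥ := by
    apply LinearMap.ker_ne_bot_of_finrank_lt
    simpa [Module.finrank_pi_fintype, finrank_degreeLT] using hdim
  obtain ⟨v, hv, hv0⟩ := (Submodule.ne_bot_iff _).1 hker
  exact ⟨v, hv0, fun k => congrArg Subtype.val (congrFun (LinearMap.mem_ker.1 hv) k)⟩

theorem exists_ne_zero_forall_sum_mul_X_pow_eq_zero {l J B D : ℕ} {T U : Fin l → K[X] →ₗ[K] K[X]}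
    (hT : ∀ k r, (T k r).natDegree ≤ r.natDegree + D)
    (hU : ∀ k r, (U k r).natDegree ≤ r.natDegree + D) (hdim : l * (B + D + J) < 2 * J * B) :
    ∃ r s : Fin J → K[X], (∀ j, (r j).natDegree < B) ∧ (∀ j, (s j).natDegree < B) ∧
      (r ≠ 0 ∨ s ≠ 0) ∧ ∀ k, ∑ j : Fin J, (T k (r j) + U k (s j)) * X ^ (j : ℕ) = 0 := by
  have hB : 0 < B := Nat.pos_of_ne_zero (by rintro rfl; simp at hdim)
  have : Module.Finite K (degreeLT K B) := Module.Finite.equiv (degreeLTEquiv K B).symm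
  let coord (j : Fin J) : (Fin J → degreeLT K B) →ₗ[K] K[X] :=
    (degreeLT K B).subtype ∘ₗ LinearMap.proj j
  let Φ (k : Fin l) : (Fin J → degreeLT K B) × (Fin J → degreeLT K B) →ₗ[K] K[X] :=
    ∑ j : Fin J, LinearMap.mulRight K (X ^ (j : ℕ)) ∘ₗ
      (T k ∘ₗ coord j).coprod (U k ∘ₗ coord j)
  have hΦ_apply (k v) : Φ k v = ∑ j : Fin J, (T k (v.1 j) + U k (v.2 j)) * X ^ (j : ℕ) := by
    simp [Φ, coord]
  have hΦ_mem (k v) : Φ k v ∈ degreeLT K (B + D + J) := by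
    rw [hΦ_apply]
    refine Submodule.sum_mem _ fun j _ => mem_degreeLT.2 ?_
    have hTj := hT k (v.1 j)
    have hUj := hU k (v.2 j)
    have hrj := natDegree_lt_of_mem_degreeLT hB (v.1 j).2
    have hsj := natDegree_lt_of_mem_degreeLT hB (v.2 j).2
    have hsum : (T k (v.1 j) + U k (v.2 j)).natDegree ≤ B - 1 + D :=
      natDegree_add_le_of_degree_le (by lia) (by lia)
    refine degree_le_natDegree.trans_lt (Nat.cast_lt.2 ?_)
    refine (natDegree_mul_le_of_le hsum (natDegree_X_pow_le _)).trans_lt ?_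
    lia
  have hfinrank : l * (B + D + J) <
      Module.finrank K ((Fin J → degreeLT K B) × (Fin J → degreeLT K B)) := by
    rw [Module.finrank_prod, Module.finrank_pi_fintype]
    simp only [finrank_degreeLT, Finset.sum_const, Finset.card_univ, Fintype.card_fin, smul_eq_mul]
    linarith
  obtain ⟨v, hv0, hv⟩ := exists_ne_zero_forall_eq_zero_of_mul_lt_finrank Φ hΦ_mem hfinrank
  refine ⟨fun j => v.1 j, fun j => v.2 j, fun j => natDegree_lt_of_mem_degreeLT hB (v.1 j).2,
    fun j => natDegree_lt_of_mem_degreeLT hB (v.2 j).2, ?_,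
    fun k => (hΦ_apply k v).symm.trans (hv k)⟩
  contrapose! hv0
  exact Prod.ext (funext fun j => Subtype.ext (congrFun hv0.1 j))
    (funext fun j => Subtype.ext (congrFun hv0.2 j))

variable [Fintype K]

local notation "Q" => Fintype.card K

theorem hasseDeriv_X_pow_mul_card_mul {k : ℕ} (hk : k < Q) (j : ℕ) (h : K[X]) :
    hasseDeriv k (X ^ (j * Q) * h) = X ^ (j * Q) * hasseDeriv k h := by
  obtain ⟨p, hchar, n, hp, hcard⟩ := FiniteField.card' K
  have := Fact.mk hp
  induction j generalizing h with
  | zero => simp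
  | succ j ih =>
    rw [add_one_mul, pow_add, mul_assoc, ih, mul_assoc, hasseDeriv_mul_of_hasseDeriv_eq_zero]
    intro i hi0 hi
    rw [hcard] at hk ⊢
    exact hasseDeriv_X_pow_primePow_eq_zero p hi0 (hi.trans_lt hk)

theorem X_pow_card_dvd_pow_card_sub_C (f : K[X]) : X ^ Q ∣ f ^ Q - C (f.coeff 0) := by
  have hX : X ∣ f - C (f.coeff 0) := X_dvd_iff.2 (by simp)
  have hexpand := _root_.map_dvd (expand K Q) hX
  rwa [map_sub, expand_X, expand_C, FiniteField.expand_card] at hexpand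

theorem sq_mul_eq_C_mul_sq_of_X_pow_card_dvd (hodd : Odd Q) {f r s : K[X]} {B : ℕ}
    (hB : 2 * B + f.natDegree ≤ Q) (hr : r.natDegree < B) (hs : s.natDegree < B)
    (h : X ^ Q ∣ r + s * f ^ ((Q - 1) / 2)) : r ^ 2 * f = C (f.coeff 0) * s ^ 2 := by
  have hdvd : X ^ Q ∣ r ^ 2 * f - C (f.coeff 0) * s ^ 2 := by
    have hpow : f ^ Q = (f ^ ((Q - 1) / 2)) ^ 2 * f := by
      rw [← pow_mul, ← pow_succ]
      congr 1
      have := hodd.pos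
      have := Nat.odd_iff.1 hodd
      lia
    have hfactor : r ^ 2 * f - C (f.coeff 0) * s ^ 2 =
        (r + s * f ^ ((Q - 1) / 2)) * ((r - s * f ^ ((Q - 1) / 2)) * f) +
          (f ^ Q - C (f.coeff 0)) * s ^ 2 := by
      rw [hpow]; ring
    rw [hfactor]
    exact dvd_add (dvd_mul_of_dvd_left h _)
      (dvd_mul_of_dvd_left (X_pow_card_dvd_pow_card_sub_C f) _)
  refine sub_eq_zero.1 (eq_zero_of_dvd_of_natDegree_lt hdvd ?_)
  rw [natDegree_X_pow]
  have hleft : (r ^ 2 * f).natDegree ≤ 2 * r.natDegree + f.natDegree :=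
    natDegree_mul_le_of_le natDegree_pow_le le_rfl
  have hright : (C (f.coeff 0) * s ^ 2).natDegree ≤ 2 * s.natDegree :=
    (natDegree_C_mul_le _ _).trans natDegree_pow_le
  exact (natDegree_sub_le _ _).trans_lt (max_lt (by lia) (by lia))

theorem eq_zero_of_X_pow_card_dvd (hodd : Odd Q) {f r s : K[X]} (hf : Squarefree f)
    (hdeg : 0 < f.natDegree) {B : ℕ} (hB : 2 * B + f.natDegree ≤ Q) (hr : r.natDegree < B)
    (hs : s.natDegree < B) (h : X ^ Q ∣ r + s * f ^ ((Q - 1) / 2)) : r = 0 ∧ s = 0 := by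
  have hsq := sq_mul_eq_C_mul_sq_of_X_pow_card_dvd hodd hB hr hs h
  by_cases ha : f.coeff 0 = 0
  · obtain rfl : r = 0 := by simpa [ha, hf.ne_zero] using hsq
    have hQ : (Q - 1) / 2 + ((Q - 1) / 2 + 1) = Q := by
      have := Nat.odd_iff.1 hodd
      lia
    have hXs : X ^ ((Q - 1) / 2 + 1) ∣ s := by
      apply X_pow_dvd_of_X_pow_dvd_mul_pow hf (X_dvd_iff.2 ha)
      rwa [hQ, ← zero_add (s * _)]
    refine ⟨rfl, eq_zero_of_dvd_of_natDegree_lt hXs ?_⟩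
    rw [natDegree_X_pow]
    lia
  · obtain rfl := eq_zero_of_sq_mul_eq_C_mul_sq hf hdeg ha hsq
    simpa [ha] using hsq

theorem eq_zero_of_sum_X_pow_mul_card_mul_eq_zero (hodd : Odd Q) {f : K[X]} (hf : Squarefree f)
    (hdeg : 0 < f.natDegree) {B : ℕ} (hB : 2 * B + f.natDegree ≤ Q) {J : ℕ} {r s : Fin J → K[X]}
    (hr : ∀ j, (r j).natDegree < B) (hs : ∀ j, (s j).natDegree < B)
    (h : ∑ j : Fin J, X ^ ((j : ℕ) * Q) * (r j + s j * f ^ ((Q - 1) / 2)) = 0) :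
    r = 0 ∧ s = 0 := by
  induction J with
  | zero => exact ⟨Subsingleton.elim _ _, Subsingleton.elim _ _⟩
  | succ J ih =>
    have hshift : ∑ j : Fin J, X ^ ((j.succ : ℕ) * Q) *
          (r j.succ + s j.succ * f ^ ((Q - 1) / 2)) =
        X ^ Q * ∑ j : Fin J, X ^ ((j : ℕ) * Q) *
          (r j.succ + s j.succ * f ^ ((Q - 1) / 2)) := by
      rw [Finset.mul_sum]
      refine Finset.sum_congr rfl fun j _ => ?_
      rw [Fin.val_succ, add_one_mul, pow_add]
      ring
    rw [Fin.sum_univ_succ, hshift, Fin.val_zero, zero_mul, pow_zero, one_mul] at h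
    have hfirst : r 0 = 0 ∧ s 0 = 0 :=
      eq_zero_of_X_pow_card_dvd hodd hf hdeg hB (hr 0) (hs 0)
        ((dvd_add_left (dvd_mul_right _ _)).1 (h ▸ dvd_zero _))
    rw [hfirst.1, hfirst.2, zero_mul, add_zero, zero_add] at h
    have hrest := ih (fun j => hr j.succ) (fun j => hs j.succ)
      ((mul_eq_zero.1 h).resolve_left (pow_ne_zero _ X_ne_zero))
    exact ⟨funext (Fin.cases hfirst.1 (congrFun hrest.1)),
      funext (Fin.cases hfirst.2 (congrFun hrest.2))⟩

/-- Stepanov's auxiliary polynomial for the equation `f(x) ^ ((Q - 1) / 2) = a`. On `K` the factors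
`X ^ (j * Q)` agree with `X ^ j`, and on the solutions `f ^ ((Q - 1) / 2)` agrees with `a`. -/
noncomputable def stepanovPoly (f : K[X]) (l : ℕ) {J : ℕ} (r s : Fin J → K[X]) : K[X] :=
  ∑ j : Fin J, X ^ ((j : ℕ) * Q) * (f ^ l * r j + f ^ (l + (Q - 1) / 2) * s j)

theorem stepanovPoly_ne_zero (hodd : Odd Q) {f : K[X]} (hf : Squarefree f)
    (hdeg : 0 < f.natDegree) {B : ℕ} (hB : 2 * B + f.natDegree ≤ Q) (l : ℕ) {J : ℕ}
    {r s : Fin J → K[X]} (hr : ∀ j, (r j).natDegree < B) (hs : ∀ j, (s j).natDegree < B)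
    (hrs : r ≠ 0 ∨ s ≠ 0) : stepanovPoly f l r s ≠ 0 := by
  have hfactor : stepanovPoly f l r s =
      f ^ l * ∑ j : Fin J, X ^ ((j : ℕ) * Q) * (r j + s j * f ^ ((Q - 1) / 2)) := by
    rw [stepanovPoly, Finset.mul_sum]
    exact Finset.sum_congr rfl fun j _ => by ring
  rw [hfactor]
  refine mul_ne_zero (pow_ne_zero l hf.ne_zero) fun h => ?_
  have := eq_zero_of_sum_X_pow_mul_card_mul_eq_zero hodd hf hdeg hB hr hs h
  tauto

theorem natDegree_stepanovPoly_le (f : K[X]) (l : ℕ) {B J : ℕ} {r s : Fin J → K[X]}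
    (hr : ∀ j, (r j).natDegree < B) (hs : ∀ j, (s j).natDegree < B) :
    (stepanovPoly f l r s).natDegree ≤
      (J - 1) * Q + ((l + (Q - 1) / 2) * f.natDegree + B) := by
  refine natDegree_sum_le_of_forall_le _ _ fun j _ => natDegree_mul_le_of_le ?_ ?_
  · exact (natDegree_X_pow_le _).trans (Nat.mul_le_mul_right _ (by lia))
  · refine natDegree_add_le_of_degree_le ?_ ?_
    · exact natDegree_mul_le_of_le (natDegree_pow_le.trans (Nat.mul_le_mul_right _ (by lia)))
        (hr j).le
    · exact natDegree_mul_le_of_le natDegree_pow_le (hs j).le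

theorem eval_hasseDeriv_stepanovPoly {f : K[X]} {l J k : ℕ} (hkl : k < l) (hkQ : k < Q)
    {T U : K[X] →ₗ[K] K[X]} (hT : ∀ r, hasseDeriv k (f ^ l * r) = f ^ (l - k) * T r)
    (hU : ∀ r, hasseDeriv k (f ^ (l + (Q - 1) / 2) * r) = f ^ (l + (Q - 1) / 2 - k) * U r)
    (r s : Fin J → K[X]) {x a : K} (hx : f.eval x ^ ((Q - 1) / 2) = a) :
    (hasseDeriv k (stepanovPoly f l r s)).eval x =
      f.eval x ^ (l - k) *
        (∑ j : Fin J, (T (r j) + (a • U) (s j)) * X ^ (j : ℕ)).eval x := by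
  rw [stepanovPoly, map_sum, eval_finsetSum, eval_finsetSum, Finset.mul_sum]
  refine Finset.sum_congr rfl fun j _ => ?_
  rw [hasseDeriv_X_pow_mul_card_mul hkQ, map_add, hT, hU, Nat.sub_add_comm hkl.le, pow_add]
  simp only [eval_mul, eval_add, eval_pow, eval_X, hx, LinearMap.smul_apply, eval_smul,
    smul_eq_mul, mul_comm (j : ℕ) Q, pow_mul, FiniteField.pow_card]
  ring

theorem mul_card_filter_eval_pow_eq_le (hodd : Odd Q) {f : K[X]} (hf : Squarefree f)
    (hdeg : 0 < f.natDegree) (a : K) {B J l : ℕ} (hB : 2 * B + f.natDegree ≤ Q) (hl : l ≤ Q)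
    (hdim : l * (B + l * f.natDegree + J) < 2 * J * B) :
    l * (Finset.univ.filter fun x : K => f.eval x ^ ((Q - 1) / 2) = a).card ≤
      (J - 1) * Q + ((l + (Q - 1) / 2) * f.natDegree + B) := by
  choose T hT hTdeg using fun k : Fin l =>
    exists_linearMap_hasseDeriv_pow_mul_eq hf.ne_zero (N := l) k.2.le
  choose U hU hUdeg using fun k : Fin l =>
    exists_linearMap_hasseDeriv_pow_mul_eq hf.ne_zero (N := l + (Q - 1) / 2) (k := k) (by lia)
  have hmul (k : Fin l) : (k : ℕ) * f.natDegree ≤ l * f.natDegree :=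
    Nat.mul_le_mul_right _ k.2.le
  obtain ⟨r, s, hr, hs, hrs, hvanish⟩ :=
    exists_ne_zero_forall_sum_mul_X_pow_eq_zero (T := T) (U := fun k => a • U k)
      (fun k r => (hTdeg k r).trans (Nat.add_le_add_left (hmul k) _))
      (fun k r => ((natDegree_smul_le a _).trans (hUdeg k r)).trans
        (Nat.add_le_add_left (hmul k) _)) hdim
  refine (mul_card_le_natDegree_of_forall_X_sub_C_pow_dvd
    (stepanovPoly_ne_zero hodd hf hdeg hB l hr hs hrs) fun x hx => ?_).trans
      (natDegree_stepanovPoly_le f l hr hs)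
  refine X_sub_C_pow_dvd_of_eval_hasseDeriv_eq_zero fun k hk => ?_
  rw [eval_hasseDeriv_stepanovPoly hk (hk.trans_le hl) (hT ⟨k, hk⟩) (hU ⟨k, hk⟩) r s
    (Finset.mem_filter.1 hx).2, hvanish ⟨k, hk⟩, eval_zero, mul_zero]

theorem stepanov_dim_lt {N m h : ℕ} (hm : 0 < m) (h16 : 16 * h ≤ N) (hsq : (2 * h) ^ 2 ≤ N)
    (h64 : 64 * m ≤ N) :
    2 * h * ((N - m) / 2 + 2 * h * m + (h + 4 * m)) < 2 * (h + 4 * m) * ((N - m) / 2) := by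
  obtain ⟨B, hB⟩ : ∃ B, B = (N - m) / 2 := ⟨_, rfl⟩
  have hNB : N ≤ 3 * B := by lia
  have hsq_mul : 4 * (h * h * m) ≤ N * m := by nlinarith
  have hself : 4 * (h * h) ≤ N * m := by nlinarith
  have hlin : 16 * (h * m) ≤ N * m := by nlinarith
  have hBm : N * m ≤ 3 * (B * m) := by nlinarith
  have hpos : 0 < N * m := Nat.mul_pos (by lia) hm
  rw [← hB]
  nlinarith

theorem card_filter_eval_pow_eq_le_of_sq_le (hodd : Odd Q) {f : K[X]} (hf : Squarefree f)
    (hdeg : 0 < f.natDegree) (a : K) (hbig : 64 * f.natDegree ^ 2 ≤ Q) :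
    2 * (Nat.sqrt Q / 2) *
        (Finset.univ.filter fun x : K => f.eval x ^ ((Q - 1) / 2) = a).card ≤
      2 * (Nat.sqrt Q / 2) * f.natDegree + (Nat.sqrt Q / 2 + 5 * f.natDegree) * Q := by
  obtain ⟨h, hh⟩ : ∃ h, h = Nat.sqrt Q / 2 := ⟨_, rfl⟩
  have hsqrt : Nat.sqrt Q * Nat.sqrt Q ≤ Q := Nat.sqrt_le Q
  have h8 : 8 * f.natDegree ≤ Nat.sqrt Q := Nat.le_sqrt.2 (by nlinarith)
  have hsq : (2 * h) ^ 2 ≤ Q := by nlinarith [show 2 * h ≤ Nat.sqrt Q by lia]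
  have h16 : 16 * h ≤ Q := by nlinarith [show 2 * h ≤ Nat.sqrt Q by lia]
  have h64 : 64 * f.natDegree ≤ Q := by nlinarith
  -- A multiplicity `l = 2 * h ≈ √Q` balances the main term `J * Q / l = Q / 2 + O(m * Q / l)`
  -- against the number of vanishing conditions.
  have hcount := mul_card_filter_eval_pow_eq_le hodd hf hdeg a
    (B := (Q - f.natDegree) / 2) (J := h + 4 * f.natDegree) (l := 2 * h)
    (by lia) (by lia) (stepanov_dim_lt hdeg h16 hsq h64)
  have hhalf : (Q - 1) / 2 * f.natDegree ≤ Q * f.natDegree := Nat.mul_le_mul_right _ (by lia)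
  have hJ : (h + 4 * f.natDegree - 1) * Q + Q = (h + 4 * f.natDegree) * Q := by
    rw [← Nat.succ_mul, Nat.succ_eq_add_one, Nat.sub_add_cancel (by lia)]
  rw [← hh]
  have hB : (Q - f.natDegree) / 2 ≤ Q := by lia
  nlinarith

theorem card_filter_eval_pow_eq_le (hodd : Odd Q) {f : K[X]} (hf : Squarefree f)
    (hdeg : 0 < f.natDegree) (a : K) :
    ((Finset.univ.filter fun x : K => f.eval x ^ ((Q - 1) / 2) = a).card : ℝ) ≤
      (Q : ℝ) / 2 + 11 * f.natDegree * √Q := by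
  have hsqrt : √(Q : ℝ) * √Q = Q := Real.mul_self_sqrt (Nat.cast_nonneg _)
  rcases lt_or_ge Q (64 * f.natDegree ^ 2) with hsmall | hbig
  · have hsqrt_le : √(Q : ℝ) ≤ 8 * f.natDegree :=
      Real.sqrt_le_iff.2 ⟨by positivity, by exact_mod_cast (by lia : Q ≤ (8 * f.natDegree) ^ 2)⟩
    have htrivial : ((Finset.univ.filter fun x : K =>
        f.eval x ^ ((Q - 1) / 2) = a).card : ℝ) ≤ Q := by exact_mod_cast Finset.card_le_univ _
    nlinarith [Real.sqrt_nonneg (Q : ℝ)]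
  · have hcount := card_filter_eval_pow_eq_le_of_sq_le hodd hf hdeg a hbig
    obtain ⟨h, hh⟩ : ∃ h, h = Nat.sqrt Q / 2 := ⟨_, rfl⟩
    have h8 : 8 * f.natDegree ≤ Nat.sqrt Q := Nat.le_sqrt.2 (by nlinarith)
    have hlt : Q < (Nat.sqrt Q + 1) * (Nat.sqrt Q + 1) := Nat.lt_succ_sqrt Q
    have hQ_le : Q ≤ (4 * h) ^ 2 := by nlinarith [show Nat.sqrt Q + 1 ≤ 4 * h by lia]
    have hsqrt_le : √(Q : ℝ) ≤ 4 * h :=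
      Real.sqrt_le_iff.2 ⟨by positivity, by exact_mod_cast hQ_le⟩
    have hone_le : 1 ≤ √(Q : ℝ) := Real.one_le_sqrt.2 (by exact_mod_cast hodd.pos)
    rw [← hh] at hcount
    set N := (Finset.univ.filter fun x : K => f.eval x ^ ((Q - 1) / 2) = a).card
    have hcount : 2 * (h : ℝ) * N ≤ 2 * h * f.natDegree + (h + 5 * f.natDegree) * Q := by
      exact_mod_cast hcount
    have hpos : (0 : ℝ) < 2 * h := by linarith
    have hQ_le : (Q : ℝ) ≤ 4 * h * √Q := by nlinarith
    refine le_of_mul_le_mul_left ?_ hpos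
    calc 2 * (h : ℝ) * N ≤ 2 * h * f.natDegree + h * Q + 5 * f.natDegree * Q := by linarith
      _ ≤ 2 * h * f.natDegree * √Q + h * Q + 5 * f.natDegree * (4 * h * √Q) :=
        add_le_add (add_le_add_left (le_mul_of_one_le_right (by positivity) hone_le) _) (by gcongr)
      _ = 2 * h * (Q / 2 + 11 * f.natDegree * √Q) := by ring

end Stepanov

section Primes

theorem X_pow_add_degreeLT_injective {F : Type*} [Field F] (k : ℕ) :
    Function.Injective fun H : degreeLT F k => X ^ k + (H : F[X]) :=
  fun _ _ h => Subtype.ext (add_left_cancel h)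

variable (Fq : Type*) [Field Fq] [Fintype Fq]

noncomputable instance fintypeDegreeLT (k : ℕ) : Fintype (degreeLT Fq k) :=
  Fintype.ofEquiv _ (degreeLTEquiv Fq k).toEquiv.symm

/-- The monic polynomials of degree `k` over a finite field, as a finite set. -/
noncomputable def monicsOfDegree (k : ℕ) : Finset Fq[X] :=
  Finset.univ.image fun H : degreeLT Fq k => X ^ k + (H : Fq[X])

/-- The primes of degree `k`, where a prime of `Fq[X]` is a monic irreducible polynomial. -/
noncomputable def primesOfDegree (k : ℕ) : Finset Fq[X] :=
  (monicsOfDegree Fq k).filter Irreducible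

/-- The primes of degree at most `N`, where a prime of `Fq[X]` is a monic irreducible polynomial. -/
noncomputable def primesUpTo (N : ℕ) : Finset Fq[X] :=
  (Finset.range (N + 1)).biUnion (primesOfDegree Fq)

variable {Fq}

theorem mem_monicsOfDegree {k : ℕ} {F : Fq[X]} :
    F ∈ monicsOfDegree Fq k ↔ F.Monic ∧ F.natDegree = k := by
  simp only [monicsOfDegree, Finset.mem_image, Finset.mem_univ, true_and]
  constructor
  · rintro ⟨⟨H, hH⟩, rfl⟩
    rw [mem_degreeLT] at hH
    refine ⟨monic_X_pow_add hH, ?_⟩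
    rw [natDegree_add_eq_left_of_degree_lt (by rwa [degree_X_pow]), natDegree_X_pow]
  · rintro ⟨hmonic, hdeg⟩
    have hdegree : F.degree = k := by rw [degree_eq_natDegree hmonic.ne_zero, hdeg]
    refine ⟨⟨F - X ^ k, mem_degreeLT.2 ?_⟩, by simp⟩
    rw [← hdegree]
    exact degree_sub_lt_left (by rw [degree_X_pow, hdegree]) hmonic.ne_zero
      (by rw [hmonic.leadingCoeff, (monic_X_pow k).leadingCoeff])

theorem card_monicsOfDegree (k : ℕ) : (monicsOfDegree Fq k).card = Fintype.card Fq ^ k := by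
  rw [monicsOfDegree, Finset.card_image_of_injective _ (X_pow_add_degreeLT_injective k),
    Finset.card_univ, Fintype.card_congr (degreeLTEquiv Fq k).toEquiv, Fintype.card_fun,
    Fintype.card_fin]

theorem mem_primesOfDegree {k : ℕ} {P : Fq[X]} :
    P ∈ primesOfDegree Fq k ↔ P.Monic ∧ Irreducible P ∧ P.natDegree = k := by
  rw [primesOfDegree, Finset.mem_filter, mem_monicsOfDegree]
  tauto

theorem mem_primesUpTo {N : ℕ} {P : Fq[X]} :
    P ∈ primesUpTo Fq N ↔ P.Monic ∧ Irreducible P ∧ P.natDegree ≤ N := by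
  simp only [primesUpTo, Finset.mem_biUnion, mem_primesOfDegree, Finset.mem_range]
  grind

theorem card_primesOfDegree_le (k : ℕ) : (primesOfDegree Fq k).card ≤ Fintype.card Fq ^ k :=
  (Finset.card_filter_le _ _).trans (card_monicsOfDegree k).le

end Primes

section QuadraticSymbol

theorem ringChar_ne_two_of_odd_card {K : Type*} [Field K] [Fintype K] (h : Odd (Fintype.card K)) :
    ringChar K ≠ 2 :=
  fun h2 => Nat.not_even_iff_odd.2 h (Nat.even_iff.2 (FiniteField.even_card_iff_char_two.1 h2))

theorem sum_comp_addMonoidHom_of_surjective {A B M : Type*} [AddGroup A] [AddGroup B]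
    [AddCommMonoid M] [Fintype A] [Fintype B] {φ : A →+ B} (hφ : Function.Surjective φ)
    (g : B → M) : ∑ a, g (φ a) = (Finset.univ.filter fun a => φ a = 0).card • ∑ b, g b := by
  rw [Finset.sum_comp g φ, Finset.image_univ_of_surjective hφ, Finset.smul_sum]
  refine Finset.sum_congr rfl fun b _ => ?_
  rw [AddMonoidHom.card_fiber_eq_of_mem_range φ (hφ b) (hφ 0)]

theorem mk_degreeLT_surjective {F : Type*} [Field F] {P : F[X]} (hP : P ≠ 0) {k : ℕ}
    (hk : P.natDegree ≤ k) :
    Function.Surjective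
      ((AdjoinRoot.mk P).toAddMonoidHom.comp (degreeLT F k).subtype.toAddMonoidHom) := by
  intro y
  obtain ⟨G, rfl⟩ := AdjoinRoot.mk_surjective y
  refine ⟨⟨G % P, mem_degreeLT.2 ?_⟩, ?_⟩
  · refine (degree_mod_lt G hP).trans_le ?_
    rw [degree_eq_natDegree hP]
    exact_mod_cast hk
  · refine AdjoinRoot.mk_eq_mk.2 ⟨-(G / P), ?_⟩
    change G % P - G = _
    linear_combination EuclideanDomain.div_add_mod G P

theorem chiP_eq_quadraticChar {F : Type*} [Field F] (P : F[X]) [Fact (Irreducible P)]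
    [Fintype (AdjoinRoot P)] (G : F[X]) :
    chiP P G = quadraticChar (AdjoinRoot P) (AdjoinRoot.mk P G) := by
  have hsquare : (∃ H, P ∣ G - H ^ 2) ↔ IsSquare (AdjoinRoot.mk P G) := by
    rw [isSquare_iff_exists_sq, AdjoinRoot.mk_surjective.exists]
    simp only [← map_pow, AdjoinRoot.mk_eq_mk]
  simp only [quadraticChar_apply, quadraticCharFun, chiP, AdjoinRoot.mk_eq_zero, hsquare]

theorem chiP_eq_zero_or_one_or_neg_one {F : Type*} [Field F] (P G : F[X]) :
    chiP P G = 0 ∨ chiP P G = 1 ∨ chiP P G = -1 := by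
  unfold chiP
  split_ifs <;> simp

theorem abs_chiP_le_one {F : Type*} [Field F] (P G : F[X]) : |(chiP P G : ℝ)| ≤ 1 := by
  rcases chiP_eq_zero_or_one_or_neg_one P G with h | h | h <;> simp [h]

section FiniteField

variable {Fq : Type*} [Field Fq] [Finite Fq] {P : Fq[X]}

theorem finite_adjoinRoot (hP : P ≠ 0) : Finite (AdjoinRoot P) :=
  have := (AdjoinRoot.powerBasis hP).finite
  Module.finite_of_finite Fq

theorem chiP_one (hP : Irreducible P) : chiP P 1 = 1 := by
  have := Fact.mk hP
  have := finite_adjoinRoot hP.ne_zero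
  have := Fintype.ofFinite (AdjoinRoot P)
  rw [chiP_eq_quadraticChar, map_one, map_one]

theorem chiP_mul (hP : Irreducible P) (F G : Fq[X]) : chiP P (F * G) = chiP P F * chiP P G := by
  have := Fact.mk hP
  have := finite_adjoinRoot hP.ne_zero
  have := Fintype.ofFinite (AdjoinRoot P)
  simp only [chiP_eq_quadraticChar, map_mul]

theorem chiP_prod (hP : Irreducible P) (S : Finset Fq[X]) :
    chiP P (∏ Q ∈ S, Q) = ∏ Q ∈ S, chiP P Q :=
  map_prod (⟨⟨chiP P, chiP_one hP⟩, chiP_mul hP⟩ : Fq[X] →* ℤ) (fun Q => Q) S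

end FiniteField

variable {Fq : Type*} [Field Fq] [Fintype Fq] {P : Fq[X]}

theorem card_adjoinRoot (hP : P ≠ 0) [Fintype (AdjoinRoot P)] :
    Fintype.card (AdjoinRoot P) = Fintype.card Fq ^ P.natDegree := by
  rw [← Nat.card_eq_fintype_card, ← Nat.card_eq_fintype_card]
  have := (AdjoinRoot.powerBasis hP).finite
  rw [Module.natCard_eq_pow_finrank (K := Fq), (AdjoinRoot.powerBasis hP).finrank,
    AdjoinRoot.powerBasis_dim]

theorem aeval_pow_eq_chiP {K : Type*} [Field K] [Fintype K] [Algebra Fq K]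
    (hodd : Odd (Fintype.card Fq)) (hP : Irreducible P)
    (hcard : Fintype.card K = Fintype.card Fq ^ P.natDegree) {x : K} (hx : aeval x P = 0)
    (F : Fq[X]) : aeval x F ^ ((Fintype.card K - 1) / 2) = (chiP P F : K) := by
  have := Fact.mk hP
  have := finite_adjoinRoot hP.ne_zero
  have := Fintype.ofFinite (AdjoinRoot P)
  have hcard' : Fintype.card (AdjoinRoot P) = Fintype.card K :=
    (card_adjoinRoot hP.ne_zero).trans hcard.symm
  have hodd' : Odd (Fintype.card K) := hcard ▸ hodd.pow
  have heuler := quadraticChar_eq_pow_of_char_ne_two'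
    (ringChar_ne_two_of_odd_card (hcard' ▸ hodd')) (AdjoinRoot.mk P F)
  rw [← chiP_eq_quadraticChar, hcard'] at heuler
  have hlift : AdjoinRoot.lift (algebraMap Fq K) x hx (AdjoinRoot.mk P F) = aeval x F :=
    AdjoinRoot.lift_mk hx F
  rw [← hlift, ← map_intCast (AdjoinRoot.lift (algebraMap Fq K) x hx), heuler, map_pow]
  congr 1
  have := Nat.odd_iff.1 hodd'
  lia

theorem sum_chiP_monicsOfDegree_eq_zero (hodd : Odd (Fintype.card Fq)) (hP : Irreducible P) {k : ℕ}
    (hk : P.natDegree ≤ k) : ∑ F ∈ monicsOfDegree Fq k, chiP P F = 0 := by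
  have := Fact.mk hP
  have := finite_adjoinRoot hP.ne_zero
  have := Fintype.ofFinite (AdjoinRoot P)
  have hodd' : Odd (Fintype.card (AdjoinRoot P)) := card_adjoinRoot hP.ne_zero ▸ hodd.pow
  rw [monicsOfDegree, Finset.sum_image (X_pow_add_degreeLT_injective k).injOn]
  simp only [chiP_eq_quadraticChar, map_add]
  have hshift : ∑ y, quadraticChar (AdjoinRoot P) (AdjoinRoot.mk P (X ^ k) + y) = 0 :=
    (Equiv.sum_comp (Equiv.addLeft (AdjoinRoot.mk P (X ^ k))) (quadraticChar _)).trans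
      (quadraticChar_sum_zero (ringChar_ne_two_of_odd_card hodd'))
  refine (sum_comp_addMonoidHom_of_surjective (mk_degreeLT_surjective hP.ne_zero hk)
    fun y => quadraticChar (AdjoinRoot P) (AdjoinRoot.mk P (X ^ k) + y)).trans ?_
  rw [hshift, smul_zero]

end QuadraticSymbol

section CharacterSum

theorem splits_X_pow_card_sub_X (K : Type*) [Field K] [Fintype K] :
    (X ^ Fintype.card K - X : K[X]).Splits := by
  rw [splits_iff_card_roots, FiniteField.roots_X_pow_card_sub_X,
    FiniteField.X_pow_card_sub_X_natDegree_eq _ Fintype.one_lt_card]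
  rfl

theorem pow_card_pow_natDegree_minpoly_eq_self {F K : Type*} [Field F] [Fintype F] [Field K]
    [Algebra F K] {x : K} (hx : IsIntegral F x) :
    x ^ Fintype.card F ^ (minpoly F x).natDegree = x := by
  have hdvd : minpoly F x ∣ X ^ Nat.card F ^ (minpoly F x).natDegree - X :=
    (minpoly.irreducible hx).natDegree_dvd_iff_dvd_X_pow_card_pow_sub_X.1 dvd_rfl
  simpa [sub_eq_zero] using (minpoly.dvd_iff).1 hdvd

theorem squarefree_map_algebraMap {F K : Type*} [Field F] [PerfectField F] [Field K]
    [PerfectField K] [Algebra F K] {f : F[X]} (hf : Squarefree f) :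
    Squarefree (f.map (algebraMap F K)) := by
  rw [← PerfectField.separable_iff_squarefree] at hf ⊢
  exact hf.map

theorem sum_Icc_one_pow_le {q : ℕ} (hq : 2 ≤ q) (m : ℕ) :
    ∑ d ∈ Finset.Icc 1 m, q ^ d ≤ 2 * q ^ m := by
  induction m with
  | zero => simp
  | succ m ih =>
    rw [Finset.sum_Icc_succ_top (by lia)]
    have : 2 * q ^ m ≤ q ^ (m + 1) := by
      rw [pow_succ, mul_comm]
      exact Nat.mul_le_mul_left _ hq
    lia

variable {Fq K : Type*} [Field Fq] [Fintype Fq] [Field K] [Fintype K] [Algebra Fq K]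

theorem card_filter_aeval_eq_zero {P : Fq[X]} (hP : Irreducible P)
    (hcard : Fintype.card K = Fintype.card Fq ^ P.natDegree) :
    (Finset.univ.filter fun x : K => aeval x P = 0).card = P.natDegree := by
  have hsep : P.Separable := PerfectField.separable_of_irreducible hP
  have hdvd : P.map (algebraMap Fq K) ∣ X ^ Fintype.card K - X := by
    simpa [hcard] using Polynomial.map_dvd (algebraMap Fq K)
      (hP.natDegree_dvd_iff_dvd_X_pow_card_pow_sub_X.1 dvd_rfl)
  have hsplits := (splits_X_pow_card_sub_X K).of_dvd
    (FiniteField.X_pow_card_sub_X_ne_zero K Fintype.one_lt_card) hdvd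
  rw [← card_rootSet_eq_natDegree hsep hsplits, ← Set.toFinset_card]
  congr 1
  ext x
  simp [mem_rootSet, hP.ne_zero]

theorem mul_card_filter_chiP_eq_le (hodd : Odd (Fintype.card Fq)) {n : ℕ}
    (hcard : Fintype.card K = Fintype.card Fq ^ n) (f : Fq[X]) (a : ℤ) :
    n * ((primesOfDegree Fq n).filter fun P => chiP P f = a).card ≤
      (Finset.univ.filter fun x : K =>
        (f.map (algebraMap Fq K)).eval x ^ ((Fintype.card K - 1) / 2) = (a : K)).card := by
  set S := (primesOfDegree Fq n).filter fun P => chiP P f = a with hS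
  let rootsIn (P : Fq[X]) : Finset K := Finset.univ.filter fun x : K => aeval x P = 0
  have hmem {P : Fq[X]} (hP : P ∈ S) :
      P.Monic ∧ Irreducible P ∧ P.natDegree = n ∧ chiP P f = a := by
    rw [hS, Finset.mem_filter, mem_primesOfDegree] at hP
    tauto
  have hdisj : (S : Set Fq[X]).PairwiseDisjoint rootsIn := by
    refine fun P hP P' hP' hne => Finset.disjoint_left.2 fun x hx hx' => hne ?_
    obtain ⟨hmonic, hirr, -⟩ := hmem hP
    obtain ⟨hmonic', hirr', -⟩ := hmem hP'
    exact (minpoly.eq_of_irreducible_of_monic hirr (Finset.mem_filter.1 hx).2 hmonic).trans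
      (minpoly.eq_of_irreducible_of_monic hirr' (Finset.mem_filter.1 hx').2 hmonic').symm
  have hunion : (S.biUnion rootsIn).card = n * S.card := by
    rw [Finset.card_biUnion hdisj, mul_comm]
    refine Finset.sum_const_nat fun P hP => ?_
    obtain ⟨-, hirr, rfl, -⟩ := hmem hP
    exact card_filter_aeval_eq_zero hirr hcard
  rw [← hunion]
  refine Finset.card_le_card fun x hx => Finset.mem_filter.2 ⟨Finset.mem_univ x, ?_⟩
  obtain ⟨P, hP, hxP⟩ := Finset.mem_biUnion.1 hx
  obtain ⟨-, hirr, rfl, rfl⟩ := hmem hP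
  rw [eval_map_algebraMap, aeval_pow_eq_chiP hodd hirr hcard (Finset.mem_filter.1 hxP).2]

theorem natDegree_minpoly_le_half {n : ℕ} (hcard : Fintype.card K = Fintype.card Fq ^ n) {x : K}
    (hx : (minpoly Fq x).natDegree ≠ n) : (minpoly Fq x).natDegree ≤ n / 2 := by
  have hfinrank : Module.finrank Fq K = n :=
    Nat.pow_right_injective (Fintype.one_lt_card (α := Fq))
      (Module.card_eq_pow_finrank.symm.trans hcard)
  obtain ⟨c, hc⟩ := hfinrank ▸ minpoly.degree_dvd (Algebra.IsIntegral.isIntegral (R := Fq) x)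
  have hn : 0 < n := hfinrank ▸ Module.finrank_pos
  have hc2 : 2 ≤ c := by
    by_contra! hlt
    interval_cases c <;> lia
  rw [Nat.le_div_iff_mul_le two_pos]
  exact (Nat.mul_le_mul_left _ hc2).trans_eq hc.symm

theorem card_filter_natDegree_minpoly_ne_le {n : ℕ}
    (hcard : Fintype.card K = Fintype.card Fq ^ n) :
    (Finset.univ.filter fun x : K => (minpoly Fq x).natDegree ≠ n).card ≤
      2 * Fintype.card Fq ^ (n / 2) := by
  have hsub : (Finset.univ.filter fun x : K => (minpoly Fq x).natDegree ≠ n) ⊆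
      (Finset.Icc 1 (n / 2)).biUnion fun d =>
        (X ^ Fintype.card Fq ^ d - X : K[X]).roots.toFinset := by
    intro x hx
    have hpos := minpoly.natDegree_pos (Algebra.IsIntegral.isIntegral (R := Fq) x)
    refine Finset.mem_biUnion.2 ⟨(minpoly Fq x).natDegree, Finset.mem_Icc.2
      ⟨hpos, natDegree_minpoly_le_half hcard (Finset.mem_filter.1 hx).2⟩, ?_⟩
    rw [Multiset.mem_toFinset,
      mem_roots (FiniteField.X_pow_card_pow_sub_X_ne_zero K hpos.ne' Fintype.one_lt_card)]
    simp [IsRoot, pow_card_pow_natDegree_minpoly_eq_self (Algebra.IsIntegral.isIntegral x)]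
  refine (Finset.card_le_card hsub).trans (Finset.card_biUnion_le.trans ?_)
  refine (Finset.sum_le_sum fun d hd => ?_).trans (sum_Icc_one_pow_le Fintype.one_lt_card _)
  rw [Finset.mem_Icc] at hd
  refine (Multiset.toFinset_card_le _).trans ((card_roots' _).trans_eq ?_)
  exact FiniteField.X_pow_card_pow_sub_X_natDegree_eq K (by lia) Fintype.one_lt_card

theorem card_filter_natDegree_minpoly_eq_le {n : ℕ}
    (hcard : Fintype.card K = Fintype.card Fq ^ n) :
    (Finset.univ.filter fun x : K => (minpoly Fq x).natDegree = n).card ≤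
      n * (primesOfDegree Fq n).card := by
  refine Finset.card_le_mul_card_image_of_maps_to (f := fun x => minpoly Fq x)
    (fun x hx => ?_) n fun P hP => ?_
  · have hint := Algebra.IsIntegral.isIntegral (R := Fq) x
    exact mem_primesOfDegree.2
      ⟨minpoly.monic hint, minpoly.irreducible hint, (Finset.mem_filter.1 hx).2⟩
  · obtain ⟨-, hirr, rfl⟩ := mem_primesOfDegree.1 hP
    rw [← card_filter_aeval_eq_zero (K := K) hirr hcard]
    refine Finset.card_le_card fun x hx => Finset.mem_filter.2 ⟨Finset.mem_univ x, ?_⟩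
    rw [← (Finset.mem_filter.1 hx).2, minpoly.aeval]

theorem card_sub_two_mul_sqrt_le_mul_card_primesOfDegree {n : ℕ}
    (hcard : Fintype.card K = Fintype.card Fq ^ n) :
    (Fintype.card K : ℝ) - 2 * √(Fintype.card K) ≤ n * ((primesOfDegree Fq n).card : ℝ) := by
  have hcount : Fintype.card K ≤
      n * (primesOfDegree Fq n).card + 2 * Fintype.card Fq ^ (n / 2) := by
    rw [← Finset.card_univ, ← Finset.card_filter_add_card_filter_not
      (s := (Finset.univ : Finset K)) fun x => (minpoly Fq x).natDegree = n]
    exact Nat.add_le_add (card_filter_natDegree_minpoly_eq_le hcard)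
      (card_filter_natDegree_minpoly_ne_le hcard)
  have hsqrt : (Fintype.card Fq : ℝ) ^ (n / 2) ≤ √(Fintype.card K) := by
    refine Real.le_sqrt_of_sq_le ?_
    rw [← pow_mul, hcard]
    push_cast
    exact pow_le_pow_right₀ (by exact_mod_cast Fintype.card_pos) (by lia)
  have hcount : (Fintype.card K : ℝ) ≤
      n * (primesOfDegree Fq n).card + 2 * (Fintype.card Fq : ℝ) ^ (n / 2) := by
    exact_mod_cast hcount
  linarith

theorem mul_card_filter_chiP_eq_le_half_add (hodd : Odd (Fintype.card Fq)) {n : ℕ}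
    (hcard : Fintype.card K = Fintype.card Fq ^ n) {f : Fq[X]} (hf : Squarefree f)
    (hdeg : 0 < f.natDegree) (a : ℤ) :
    (n * ((primesOfDegree Fq n).filter fun P => chiP P f = a).card : ℝ) ≤
      Fintype.card K / 2 + 11 * f.natDegree * √(Fintype.card K) := by
  have hdegK : (f.map (algebraMap Fq K)).natDegree = f.natDegree := natDegree_map _
  have hpoints := card_filter_eval_pow_eq_le (hcard ▸ hodd.pow : Odd (Fintype.card K))
    (squarefree_map_algebraMap hf) (hdegK.symm ▸ hdeg) (a : K)
  rw [hdegK] at hpoints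
  exact le_trans (by exact_mod_cast mul_card_filter_chiP_eq_le hodd hcard f a) hpoints

theorem mul_card_filter_chiP_eq_zero_le (hodd : Odd (Fintype.card Fq)) {n : ℕ}
    (hcard : Fintype.card K = Fintype.card Fq ^ n) {f : Fq[X]} (hf : f ≠ 0) :
    n * ((primesOfDegree Fq n).filter fun P => chiP P f = 0).card ≤ f.natDegree := by
  refine (mul_card_filter_chiP_eq_le hodd hcard f 0).trans ?_
  rw [← natDegree_map (algebraMap Fq K)]
  refine le_trans (Finset.card_le_card fun x hx => ?_)
    ((Multiset.toFinset_card_le _).trans (card_roots' (f.map (algebraMap Fq K))))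
  have hx := (Finset.mem_filter.1 hx).2
  rw [Int.cast_zero] at hx
  rw [Multiset.mem_toFinset, mem_roots (map_ne_zero hf)]
  exact eq_zero_of_pow_eq_zero hx

theorem mul_abs_sum_chiP_le (hodd : Odd (Fintype.card Fq)) {n : ℕ}
    (hcard : Fintype.card K = Fintype.card Fq ^ n) {f : Fq[X]} (hf : Squarefree f)
    (hdeg : 0 < f.natDegree) :
    n * |∑ P ∈ primesOfDegree Fq n, (chiP P f : ℝ)| ≤
      25 * f.natDegree * √(Fintype.card K) := by
  let N (a : ℤ) : ℝ := ((primesOfDegree Fq n).filter fun P => chiP P f = a).card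
  have htotal : ((primesOfDegree Fq n).card : ℝ) = N 1 + N (-1) + N 0 := by
    simp only [N, Finset.card_filter, Nat.cast_sum, ← Finset.sum_add_distrib]
    rw [Finset.cast_card]
    refine Finset.sum_congr rfl fun P _ => ?_
    rcases chiP_eq_zero_or_one_or_neg_one P f with h | h | h <;> norm_num [h]
  have hsum : ∑ P ∈ primesOfDegree Fq n, (chiP P f : ℝ) = N 1 - N (-1) := by
    simp only [N, Finset.card_filter, Nat.cast_sum, ← Finset.sum_sub_distrib]
    refine Finset.sum_congr rfl fun P _ => ?_
    rcases chiP_eq_zero_or_one_or_neg_one P f with h | h | h <;> norm_num [h]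
  have hpos := mul_card_filter_chiP_eq_le_half_add (K := K) hodd hcard hf hdeg 1
  have hneg := mul_card_filter_chiP_eq_le_half_add (K := K) hodd hcard hf hdeg (-1)
  have hzero : n * N 0 ≤ f.natDegree := by
    simp only [N]
    exact_mod_cast mul_card_filter_chiP_eq_zero_le (K := K) hodd hcard hf.ne_zero
  have hprimes := card_sub_two_mul_sqrt_le_mul_card_primesOfDegree (Fq := Fq) (K := K) hcard
  rw [htotal] at hprimes
  have hsqrt : 1 ≤ √(Fintype.card K : ℝ) :=
    Real.one_le_sqrt.2 (by exact_mod_cast Fintype.card_pos)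
  have hdeg_le : (f.natDegree : ℝ) ≤ f.natDegree * √(Fintype.card K) :=
    le_mul_of_one_le_right (by positivity) hsqrt
  have hsqrt_le : √(Fintype.card K) ≤ f.natDegree * √(Fintype.card K) :=
    le_mul_of_one_le_left (by positivity) (by exact_mod_cast hdeg)
  rw [hsum, ← Nat.abs_cast n, ← abs_mul, abs_le]
  constructor <;> linarith

theorem abs_sum_chiP_primesOfDegree_le (hodd : Odd (Fintype.card Fq)) {n : ℕ} (hn : n ≠ 0)
    {f : Fq[X]} (hf : Squarefree f) (hdeg : 0 < f.natDegree) :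
    |∑ P ∈ primesOfDegree Fq n, (chiP P f : ℝ)| ≤
      25 * f.natDegree * √((Fintype.card Fq : ℝ) ^ n) / n := by
  obtain ⟨p, hp⟩ := CharP.exists Fq
  have := Fact.mk (CharP.char_is_prime Fq p)
  have := NeZero.mk hn
  have := Fintype.ofFinite (FiniteField.Extension Fq p n)
  have hcard : Fintype.card (FiniteField.Extension Fq p n) = Fintype.card Fq ^ n := by
    simpa only [Nat.card_eq_fintype_card] using FiniteField.natCard_extension Fq p n
  have hbound := mul_abs_sum_chiP_le hodd hcard hf hdeg
  rw [hcard, Nat.cast_pow] at hbound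
  rwa [le_div_iff₀' (by positivity)]

end CharacterSum

section CoeffDominated

/-- Coefficientwise domination `|f_k| ≤ g_k` of a real polynomial by another one. -/
def CoeffDominated (f g : ℝ[X]) : Prop :=
  ∀ k, |f.coeff k| ≤ g.coeff k

namespace CoeffDominated

variable {f g f' g' : ℝ[X]}

theorem one : CoeffDominated 1 1 := fun k => by
  rw [coeff_one]
  split_ifs <;> simp

theorem C_mul_X_pow {a b : ℝ} (h : |a| ≤ b) (k : ℕ) :
    CoeffDominated (C a * X ^ k) (C b * X ^ k) := fun j => by
  rw [coeff_C_mul_X_pow, coeff_C_mul_X_pow]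
  split_ifs
  · exact h
  · exact abs_zero.le

theorem add (h : CoeffDominated f g) (h' : CoeffDominated f' g') :
    CoeffDominated (f + f') (g + g') := fun k => by
  rw [coeff_add, coeff_add]
  exact (abs_add_le _ _).trans (add_le_add (h k) (h' k))

theorem add_right (h : CoeffDominated f g) (hg' : ∀ k, 0 ≤ g'.coeff k) :
    CoeffDominated f (g + g') := fun k => by
  rw [coeff_add]
  exact le_add_of_le_of_nonneg (h k) (hg' k)

theorem mul (h : CoeffDominated f g) (h' : CoeffDominated f' g') :
    CoeffDominated (f * f') (g * g') := fun k => by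
  rw [coeff_mul, coeff_mul]
  refine (Finset.abs_sum_le_sum_abs _ _).trans (Finset.sum_le_sum fun x _ => ?_)
  rw [abs_mul]
  exact mul_le_mul (h _) (h' _) (abs_nonneg _) ((abs_nonneg _).trans (h _))

theorem prod {ι : Type*} {S : Finset ι} {f g : ι → ℝ[X]}
    (h : ∀ i ∈ S, CoeffDominated (f i) (g i)) :
    CoeffDominated (∏ i ∈ S, f i) (∏ i ∈ S, g i) := by
  induction S using Finset.cons_induction with
  | empty => simpa only [Finset.prod_empty] using one
  | cons i S hi ih =>
    rw [Finset.prod_cons, Finset.prod_cons]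
    exact (h i (Finset.mem_cons_self i S)).mul (ih fun j hj => h j (Finset.mem_cons_of_mem hj))

theorem coeff_nonneg (h : CoeffDominated f g) (k : ℕ) : 0 ≤ g.coeff k :=
  (abs_nonneg _).trans (h k)

theorem abs_coeff_mul_pow_le_eval (h : CoeffDominated f g) {R : ℝ} (hR : 0 ≤ R) (k : ℕ) :
    |f.coeff k| * R ^ k ≤ g.eval R := by
  have hterm (i : ℕ) : 0 ≤ g.coeff i * R ^ i := mul_nonneg (h.coeff_nonneg i) (pow_nonneg hR i)
  refine (mul_le_mul_of_nonneg_right (h k) (pow_nonneg hR k)).trans ?_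
  rw [eval_eq_sum_range' (Nat.lt_succ_of_le (Nat.le_max_left g.natDegree k))]
  exact Finset.single_le_sum (f := fun i => g.coeff i * R ^ i) (fun i _ => hterm i)
    (Finset.mem_range.2 (by lia))

end CoeffDominated

end CoeffDominated

section EulerPoly

/-- The finite Euler product `∏_{Q ∈ S} (1 + v(Q) u^{deg Q})` as a polynomial in `u`. -/
noncomputable def eulerPoly {F : Type*} [Field F] (v : F[X] → ℝ) (S : Finset F[X]) : ℝ[X] :=
  ∏ Q ∈ S, (1 + C (v Q) * X ^ Q.natDegree)

variable {F : Type*} [Field F]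

theorem coeff_eulerPoly (v : F[X] → ℝ) (S : Finset F[X]) (k : ℕ) :
    (eulerPoly v S).coeff k =
      ∑ T ∈ S.powerset with ∑ Q ∈ T, Q.natDegree = k, ∏ Q ∈ T, v Q := by
  rw [eulerPoly, Finset.prod_one_add, finsetSum_coeff, Finset.sum_filter]
  refine Finset.sum_congr rfl fun T _ => ?_
  rw [Finset.prod_mul_distrib, ← map_prod, Finset.prod_pow_eq_pow_sum, coeff_C_mul_X_pow]
  simp only [eq_comm]

theorem coeff_eulerPoly_nonneg {v : F[X] → ℝ} (hv : ∀ Q, 0 ≤ v Q) (S : Finset F[X]) (k : ℕ) :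
    0 ≤ (eulerPoly v S).coeff k := by
  rw [coeff_eulerPoly]
  exact Finset.sum_nonneg fun T _ => Finset.prod_nonneg fun Q _ => hv Q

variable {T : Finset F[X]}

theorem eq_of_monic_irreducible_of_dvd {P Q : F[X]} (hP : P.Monic ∧ Irreducible P)
    (hQ : Q.Monic ∧ Irreducible Q) (h : P ∣ Q) : P = Q :=
  eq_of_monic_of_associated hP.1 hQ.1 (hP.2.associated_of_dvd hQ.2 h)

theorem dvd_prod_iff_mem_of_monic_irreducible (hT : ∀ Q ∈ T, Q.Monic ∧ Irreducible Q) {P : F[X]}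
    (hP : P.Monic ∧ Irreducible P) : P ∣ ∏ Q ∈ T, Q ↔ P ∈ T := by
  refine ⟨fun h => ?_, Finset.dvd_prod_of_mem _⟩
  obtain ⟨Q, hQ, hPQ⟩ := (hP.2.prime.dvd_finsetProd_iff _).1 h
  rwa [eq_of_monic_irreducible_of_dvd hP (hT Q hQ) hPQ]

theorem squarefree_prod_of_monic_irreducible (hT : ∀ Q ∈ T, Q.Monic ∧ Irreducible Q) :
    Squarefree (∏ Q ∈ T, Q) := by
  refine Finset.squarefree_prod_of_pairwise_isCoprime (fun P hP Q hQ hne => ?_)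
    fun Q hQ => (hT Q hQ).2.squarefree
  exact ((hT P hP).2.coprime_iff_not_dvd.2 fun h =>
    hne (eq_of_monic_irreducible_of_dvd (hT P hP) (hT Q hQ) h)).isRelPrime

theorem injOn_prod_of_monic_irreducible (S : Finset F[X])
    (hS : ∀ Q ∈ S, Q.Monic ∧ Irreducible Q) :
    Set.InjOn (fun T : Finset F[X] => ∏ Q ∈ T, Q) (S.powerset : Set (Finset F[X])) := by
  intro T hT T' hT' (h : ∏ Q ∈ T, Q = ∏ Q ∈ T', Q)
  rw [Finset.mem_coe, Finset.mem_powerset] at hT hT'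
  have hmem {U : Finset F[X]} (hU : U ⊆ S) {P : F[X]} (hP : P ∈ S) : P ∣ ∏ Q ∈ U, Q ↔ P ∈ U :=
    dvd_prod_iff_mem_of_monic_irreducible (fun Q hQ => hS Q (hU hQ)) (hS P hP)
  refine Finset.Subset.antisymm (fun P hP => ?_) fun P hP => ?_
  · rw [← hmem hT' (hT hP), ← h, hmem hT (hT hP)]
    exact hP
  · rw [← hmem hT (hT' hP), h, hmem hT' (hT' hP)]
    exact hP

variable {Fq : Type*} [Field Fq] [Fintype Fq] {S : Finset Fq[X]}

theorem card_powerset_filter_sum_natDegree_le (hS : ∀ Q ∈ S, Q.Monic ∧ Irreducible Q) (k : ℕ) :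
    (S.powerset.filter fun T => ∑ Q ∈ T, Q.natDegree = k).card ≤ Fintype.card Fq ^ k := by
  rw [← card_monicsOfDegree]
  refine Finset.card_le_card_of_injOn (fun T => ∏ Q ∈ T, Q) (fun T hT => ?_)
    ((injOn_prod_of_monic_irreducible S hS).mono (Finset.coe_subset.2 (Finset.filter_subset _ _)))
  rw [Finset.mem_coe, Finset.mem_filter, Finset.mem_powerset] at hT
  have hmonic : ∀ Q ∈ T, Q.Monic := fun Q hQ => (hS Q (hT.1 hQ)).1
  rw [Finset.mem_coe, mem_monicsOfDegree, natDegree_prod_of_monic _ _ hmonic]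
  exact ⟨monic_prod_of_monic _ _ hmonic, hT.2⟩

theorem coeff_eulerPoly_pow_natDegree_le {t : ℝ} (ht : 0 ≤ t)
    (hS : ∀ Q ∈ S, Q.Monic ∧ Irreducible Q) (k : ℕ) :
    (eulerPoly (fun Q => t ^ Q.natDegree) S).coeff k ≤ (Fintype.card Fq * t) ^ k := by
  have hterm : ∀ T ∈ S.powerset.filter (fun T => ∑ Q ∈ T, Q.natDegree = k),
      ∏ Q ∈ T, t ^ Q.natDegree = t ^ k := fun T hT => by
    rw [Finset.prod_pow_eq_pow_sum, (Finset.mem_filter.1 hT).2]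
  rw [coeff_eulerPoly, Finset.sum_congr rfl hterm, Finset.sum_const, nsmul_eq_mul, mul_pow]
  gcongr
  exact_mod_cast card_powerset_filter_sum_natDegree_le hS k

theorem coeff_eulerPoly_primesUpTo_of_le (v : Fq[X] → ℝ) {k N : ℕ} (h : k ≤ N) :
    (eulerPoly v (primesUpTo Fq N)).coeff k = (eulerPoly v (primesUpTo Fq k)).coeff k := by
  rw [coeff_eulerPoly, coeff_eulerPoly]
  congr 1
  ext T
  simp only [Finset.mem_filter, Finset.mem_powerset]
  refine and_congr_left fun hT => ⟨fun hsub Q hQ => ?_, fun hsub Q hQ => ?_⟩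
  · obtain ⟨hmonic, hirr, -⟩ := mem_primesUpTo.1 (hsub hQ)
    exact mem_primesUpTo.2 ⟨hmonic, hirr, hT ▸
      Finset.single_le_sum (f := natDegree) (fun _ _ => Nat.zero_le _) hQ⟩
  · obtain ⟨hmonic, hirr, hdeg⟩ := mem_primesUpTo.1 (hsub hQ)
    exact mem_primesUpTo.2 ⟨hmonic, hirr, hdeg.trans h⟩

theorem coeffDominated_eulerPoly_sq {v t : F[X] → ℝ} (ht : ∀ Q, 0 ≤ t Q)
    (hv : ∀ Q ∈ T, |v Q| ≤ 2 * t Q) :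
    CoeffDominated (eulerPoly v T) (eulerPoly t T * eulerPoly t T) := by
  rw [eulerPoly, eulerPoly, ← Finset.prod_mul_distrib]
  refine CoeffDominated.prod fun Q hQ => ?_
  have hsq : (1 + C (t Q) * X ^ Q.natDegree) * (1 + C (t Q) * X ^ Q.natDegree) =
      1 + C (2 * t Q) * X ^ Q.natDegree + C (t Q * t Q) * X ^ (2 * Q.natDegree) := by
    simp only [C_mul, C_ofNat]
    ring
  rw [hsq]
  refine (CoeffDominated.one.add (.C_mul_X_pow (hv Q hQ) _)).add_right fun k => ?_
  rw [coeff_C_mul_X_pow]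
  split_ifs
  · exact mul_nonneg (ht Q) (ht Q)
  · exact le_rfl

theorem abs_coeff_eulerPoly_le {v : Fq[X] → ℝ} (hS : ∀ Q ∈ S, Q.Monic ∧ Irreducible Q)
    (hv : ∀ Q ∈ S, |v Q| ≤ 2 * ((Fintype.card Fq : ℝ)⁻¹) ^ Q.natDegree) (k : ℕ) :
    |(eulerPoly v S).coeff k| ≤ k + 1 := by
  set t : Fq[X] → ℝ := fun Q => ((Fintype.card Fq : ℝ)⁻¹) ^ Q.natDegree
  have ht (Q : Fq[X]) : 0 ≤ t Q := by positivity
  have hle (j : ℕ) : (eulerPoly t S).coeff j ≤ 1 := by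
    refine (coeff_eulerPoly_pow_natDegree_le (by positivity) hS j).trans_eq ?_
    rw [mul_inv_cancel₀ (by exact_mod_cast Fintype.card_ne_zero), one_pow]
  calc |(eulerPoly v S).coeff k| ≤ (eulerPoly t S * eulerPoly t S).coeff k :=
        coeffDominated_eulerPoly_sq ht hv k
    _ = ∑ x ∈ Finset.HasAntidiagonal.antidiagonal k,
          (eulerPoly t S).coeff x.1 * (eulerPoly t S).coeff x.2 := coeff_mul _ _ _
    _ ≤ ∑ _x ∈ Finset.HasAntidiagonal.antidiagonal k, (1 : ℝ) :=
        Finset.sum_le_sum fun _ _ => mul_le_one₀ (hle _) (coeff_eulerPoly_nonneg ht S _) (hle _)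
    _ = k + 1 := by simp

end EulerPoly

section Sieve

variable {Fq : Type*} [Field Fq] [Fintype Fq] {S : Finset Fq[X]} {w : Fq[X] → ℝ}

theorem sum_monicsOfDegree_filter_dvd (hw : ∀ F G, w (F * G) = w F * w G)
    (hS : ∀ Q ∈ S, Q.Monic ∧ Irreducible Q) {Q : Fq[X]} (hQ : Q.Monic ∧ Irreducible Q)
    (hQS : Q ∉ S) (j : ℕ) :
    ∑ F ∈ ((monicsOfDegree Fq (j + Q.natDegree)).filter fun F => ∀ R ∈ S, ¬ R ∣ F).filter
        (Q ∣ ·), w F =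
      w Q * ∑ F ∈ monicsOfDegree Fq j with ∀ R ∈ S, ¬ R ∣ F, w F := by
  rw [Finset.mul_sum]
  refine (Finset.sum_nbij (fun F => Q * F) (fun F hF => ?_)
    (fun F _ G _ h => mul_left_cancel₀ hQ.1.ne_zero h) (fun F hF => ?_)
    fun F _ => (hw Q F).symm).symm
  · simp only [Finset.mem_filter, mem_monicsOfDegree] at hF ⊢
    refine ⟨⟨⟨hQ.1.mul hF.1.1, ?_⟩, fun R hR hdvd => ?_⟩, dvd_mul_right _ _⟩
    · rw [hQ.1.natDegree_mul hF.1.1, hF.1.2, add_comm]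
    · refine ((hS R hR).2.prime.dvd_or_dvd hdvd).elim (fun h => hQS ?_) (hF.2 R hR)
      rwa [← eq_of_monic_irreducible_of_dvd (hS R hR) hQ h]
  · simp only [Finset.coe_filter, Set.mem_ofPred_eq, Finset.mem_filter, mem_monicsOfDegree] at hF
    obtain ⟨⟨⟨hmonic, hdeg⟩, hnot⟩, G, rfl⟩ := hF
    have hG : G.Monic := hQ.1.of_mul_monic_left hmonic
    rw [hQ.1.natDegree_mul hG] at hdeg
    refine ⟨G, ?_, rfl⟩
    simp only [Finset.coe_filter, Set.mem_ofPred_eq, mem_monicsOfDegree]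
    exact ⟨⟨hG, by lia⟩, fun R hR hdvd => hnot R hR (hdvd.mul_left _)⟩

theorem filter_dvd_eq_empty_of_subset_monicsOfDegree {Q : Fq[X]} {k : ℕ} (hk : k < Q.natDegree)
    (hS : S ⊆ monicsOfDegree Fq k) : S.filter (Q ∣ ·) = ∅ := by
  refine Finset.filter_eq_empty_iff.2 fun F hF hdvd => ?_
  obtain ⟨hmonic, hdeg⟩ := mem_monicsOfDegree.1 (hS hF)
  have hle := natDegree_le_of_dvd hdvd hmonic.ne_zero
  lia

theorem eulerPoly_neg_mul_mk_sum_monicsOfDegree (hw : ∀ F G, w (F * G) = w F * w G)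
    (hS : ∀ Q ∈ S, Q.Monic ∧ Irreducible Q) :
    (eulerPoly (fun Q => -w Q) S : PowerSeries ℝ) *
        PowerSeries.mk (fun k => ∑ F ∈ monicsOfDegree Fq k, w F) =
      PowerSeries.mk fun k => ∑ F ∈ monicsOfDegree Fq k with ∀ Q ∈ S, ¬ Q ∣ F, w F := by
  induction S using Finset.cons_induction with
  | empty => simp [eulerPoly]
  | cons Q S hQS ih =>
    rw [Finset.forall_mem_cons] at hS
    rw [eulerPoly, Finset.prod_cons, Polynomial.coe_mul, mul_assoc, ← eulerPoly, ih hS.2]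
    ext k
    have hfilter : ((monicsOfDegree Fq k).filter fun F => ∀ R ∈ S, ¬ R ∣ F).filter (¬ Q ∣ ·) =
        (monicsOfDegree Fq k).filter fun F => ∀ R ∈ Finset.cons Q S hQS, ¬ R ∣ F := by
      simp only [Finset.filter_filter, Finset.forall_mem_cons, and_comm]
    simp only [coe_add, coe_one, coe_mul, coe_C, coe_pow, coe_X, add_mul, one_mul, map_add,
      mul_assoc, PowerSeries.coeff_C_mul, PowerSeries.coeff_X_pow_mul', PowerSeries.coeff_mk]
    rw [← Finset.sum_filter_add_sum_filter_not (Finset.filter _ _) (Q ∣ ·), hfilter]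
    split_ifs with hk
    · obtain ⟨j, rfl⟩ := Nat.exists_eq_add_of_le' hk
      rw [sum_monicsOfDegree_filter_dvd hw hS.2 hS.1 hQS, Nat.add_sub_cancel]
      ring
    · rw [filter_dvd_eq_empty_of_subset_monicsOfDegree (not_le.1 hk) (Finset.filter_subset _ _),
        Finset.sum_empty]
      ring

theorem filter_monicsOfDegree_not_dvd {k N : ℕ} (hk : k ≤ N) :
    ((monicsOfDegree Fq k).filter fun F => ∀ Q ∈ primesUpTo Fq N, ¬ Q ∣ F) =
      if k = 0 then {1} else ∅ := by
  split_ifs with hk0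
  · ext F
    simp only [hk0, Finset.mem_filter, mem_monicsOfDegree, Finset.mem_singleton]
    refine ⟨fun h => eq_one_of_monic_natDegree_zero h.1.1 h.1.2, ?_⟩
    rintro rfl
    exact ⟨⟨monic_one, natDegree_one⟩,
      fun Q hQ hdvd => (mem_primesUpTo.1 hQ).2.1.not_isUnit (isUnit_of_dvd_one hdvd)⟩
  · refine Finset.filter_eq_empty_iff.2 fun F hF hnot => ?_
    obtain ⟨hmonic, hdeg⟩ := mem_monicsOfDegree.1 hF
    have hunit : ¬ IsUnit F := fun h => hk0 (hdeg ▸ natDegree_eq_zero_of_isUnit h)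
    obtain ⟨Q, hQmonic, hQirr, hQF⟩ := exists_monic_irreducible_factor F hunit
    have hle := natDegree_le_of_dvd hQF hmonic.ne_zero
    exact hnot Q (mem_primesUpTo.2 ⟨hQmonic, hQirr, by lia⟩) hQF

theorem X_pow_dvd_eulerPoly_neg_mul_sub_one (hw : ∀ F G, w (F * G) = w F * w G) (hw_one : w 1 = 1)
    {N : ℕ} {L : ℝ[X]} (hL : ∀ k ≤ N, L.coeff k = ∑ F ∈ monicsOfDegree Fq k, w F) :
    X ^ (N + 1) ∣ eulerPoly (fun Q => -w Q) (primesUpTo Fq N) * L - 1 := by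
  rw [X_pow_dvd_iff]
  intro k hk
  have hprimes : ∀ Q ∈ primesUpTo Fq N, Q.Monic ∧ Irreducible Q := fun Q hQ =>
    ⟨(mem_primesUpTo.1 hQ).1, (mem_primesUpTo.1 hQ).2.1⟩
  have hsieve := congrArg (PowerSeries.coeff k) (eulerPoly_neg_mul_mk_sum_monicsOfDegree hw hprimes)
  rw [PowerSeries.coeff_mul, PowerSeries.coeff_mk, filter_monicsOfDegree_not_dvd (by lia)] at hsieve
  have hcoeff : (eulerPoly (fun Q => -w Q) (primesUpTo Fq N) * L).coeff k =
      ∑ F ∈ if k = 0 then {1} else ∅, w F := by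
    rw [← hsieve, coeff_mul]
    refine Finset.sum_congr rfl fun x hx => ?_
    rw [Finset.HasAntidiagonal.mem_antidiagonal] at hx
    rw [coeff_coe, PowerSeries.coeff_mk, hL _ (by lia)]
  rw [coeff_sub, hcoeff, coeff_one]
  split_ifs <;> simp [hw_one]

end Sieve

section LPolynomial

variable {Fq : Type*} [Field Fq] {e : ℤ} {P : Fq[X]}

/-- The sign twist `ε^{deg F} χ_P(F)` of the quadratic residue symbol. -/
noncomputable def twistedChi (e : ℤ) (P F : Fq[X]) : ℝ :=
  (e : ℝ) ^ F.natDegree * chiP P F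

theorem aQ_eq_twistedChi_add (e1 e2 : ℤ) (P Q : Fq[X]) :
    (aQ e1 e2 P Q : ℝ) = twistedChi e1 P Q + twistedChi e2 P Q := by
  simp only [aQ, twistedChi]
  push_cast
  ring

theorem abs_twistedChi_le_one (he : |e| ≤ 1) (P F : Fq[X]) : |twistedChi e P F| ≤ 1 := by
  have hpow : |(e : ℝ)| ^ F.natDegree ≤ 1 :=
    pow_le_one₀ (abs_nonneg _) (by exact_mod_cast he)
  rw [twistedChi, abs_mul, abs_pow]
  exact mul_le_one₀ hpow (abs_nonneg _) (abs_chiP_le_one P F)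

theorem abs_aQ_le_two {e1 e2 : ℤ} (he1 : |e1| ≤ 1) (he2 : |e2| ≤ 1) (P Q : Fq[X]) :
    |(aQ e1 e2 P Q : ℝ)| ≤ 2 := by
  rw [aQ_eq_twistedChi_add]
  linarith [abs_add_le (twistedChi e1 P Q) (twistedChi e2 P Q), abs_twistedChi_le_one he1 P Q,
    abs_twistedChi_le_one he2 P Q]

variable [Fintype Fq]

/-- The coefficient `ε^{deg F} χ_P(F) q^{-deg F}` of the `L`-series of `twistedChi e P`, in the
normalization where the variable `u` stands for `q^{1-s}`. -/
noncomputable def normalizedChi (e : ℤ) (P F : Fq[X]) : ℝ :=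
  twistedChi e P F * ((Fintype.card Fq : ℝ)⁻¹) ^ F.natDegree

/-- The `L`-polynomial of `twistedChi e P`: the series of all sums of `normalizedChi e P` over the
monic polynomials of a given degree, which vanish from degree `deg P` on. -/
noncomputable def lPoly (e : ℤ) (P : Fq[X]) : ℝ[X] :=
  ∑ j ∈ Finset.range P.natDegree, C (∑ F ∈ monicsOfDegree Fq j, normalizedChi e P F) * X ^ j

theorem normalizedChi_mul (hP : Irreducible P) (e : ℤ) (F G : Fq[X]) :
    normalizedChi e P (F * G) = normalizedChi e P F * normalizedChi e P G := by
  have hzero : normalizedChi e P 0 = 0 := by simp [normalizedChi, twistedChi, chiP]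
  rcases eq_or_ne F 0 with rfl | hF
  · rw [zero_mul, hzero, zero_mul]
  rcases eq_or_ne G 0 with rfl | hG
  · rw [mul_zero, hzero, mul_zero]
  simp only [normalizedChi, twistedChi, natDegree_mul hF hG, chiP_mul hP]
  push_cast
  ring

theorem normalizedChi_one (hP : Irreducible P) (e : ℤ) : normalizedChi e P 1 = 1 := by
  simp [normalizedChi, twistedChi, chiP_one hP]

theorem abs_normalizedChi_le (he : |e| ≤ 1) (P F : Fq[X]) :
    |normalizedChi e P F| ≤ ((Fintype.card Fq : ℝ)⁻¹) ^ F.natDegree := by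
  rw [normalizedChi, abs_mul, abs_of_nonneg (a := _ ^ F.natDegree) (by positivity)]
  exact mul_le_of_le_one_left (by positivity) (abs_twistedChi_le_one he P F)

theorem abs_sum_normalizedChi_monicsOfDegree_le_one (he : |e| ≤ 1) (P : Fq[X]) (j : ℕ) :
    |∑ F ∈ monicsOfDegree Fq j, normalizedChi e P F| ≤ 1 :=
  calc |∑ F ∈ monicsOfDegree Fq j, normalizedChi e P F|
      ≤ ∑ F ∈ monicsOfDegree Fq j, |normalizedChi e P F| := Finset.abs_sum_le_sum_abs _ _
    _ ≤ ∑ _F ∈ monicsOfDegree Fq j, ((Fintype.card Fq : ℝ)⁻¹) ^ j :=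
        Finset.sum_le_sum fun F hF => (mem_monicsOfDegree.1 hF).2 ▸ abs_normalizedChi_le he P F
    _ = 1 := by
        rw [Finset.sum_const, card_monicsOfDegree, nsmul_eq_mul, Nat.cast_pow, ← mul_pow,
          mul_inv_cancel₀ (by exact_mod_cast Fintype.card_ne_zero), one_pow]

theorem sum_normalizedChi_monicsOfDegree_eq_zero (hodd : Odd (Fintype.card Fq))
    (hP : Irreducible P) (e : ℤ) {k : ℕ} (hk : P.natDegree ≤ k) :
    ∑ F ∈ monicsOfDegree Fq k, normalizedChi e P F = 0 := by
  have hterm : ∀ F ∈ monicsOfDegree Fq k, normalizedChi e P F =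
      (e : ℝ) ^ k * ((Fintype.card Fq : ℝ)⁻¹) ^ k * chiP P F := fun F hF => by
    rw [normalizedChi, twistedChi, (mem_monicsOfDegree.1 hF).2]
    ring
  rw [Finset.sum_congr rfl hterm, ← Finset.mul_sum, ← Int.cast_sum,
    sum_chiP_monicsOfDegree_eq_zero hodd hP hk, Int.cast_zero, mul_zero]

theorem coeff_lPoly (hodd : Odd (Fintype.card Fq)) (hP : Irreducible P) (e : ℤ) (k : ℕ) :
    (lPoly e P).coeff k = ∑ F ∈ monicsOfDegree Fq k, normalizedChi e P F := by
  rw [lPoly, finsetSum_coeff]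
  simp only [coeff_C_mul_X_pow]
  rw [Finset.sum_ite_eq]
  split_ifs with hk
  · rfl
  · rw [Finset.mem_range, not_lt] at hk
    exact (sum_normalizedChi_monicsOfDegree_eq_zero hodd hP e hk).symm

theorem coeffDominated_lPoly (he : |e| ≤ 1) (P : Fq[X]) :
    CoeffDominated (lPoly e P) (∑ j ∈ Finset.range P.natDegree, C 1 * X ^ j) := by
  intro k
  rw [lPoly, finsetSum_coeff, finsetSum_coeff]
  exact (Finset.abs_sum_le_sum_abs _ _).trans (Finset.sum_le_sum fun j _ =>
    CoeffDominated.C_mul_X_pow (abs_sum_normalizedChi_monicsOfDegree_le_one he P j) j k)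

theorem X_pow_dvd_eulerPoly_normalizedChi_mul_lPoly_sub_one (hodd : Odd (Fintype.card Fq))
    (hP : Irreducible P) (e : ℤ) (N : ℕ) :
    X ^ (N + 1) ∣
      eulerPoly (fun Q => -normalizedChi e P Q) (primesUpTo Fq N) * lPoly e P - 1 :=
  X_pow_dvd_eulerPoly_neg_mul_sub_one (normalizedChi_mul hP e) (normalizedChi_one hP e)
    fun k _ => coeff_lPoly hodd hP e k

end LPolynomial

section EulerCoeff

variable {Fq : Type*} [Field Fq] [Fintype Fq] {e1 e2 : ℤ}

/-- The number `v_P(Q)` with `1 + δ_P(Q) = (1 - q^{-2 deg Q}) (1 + v_P(Q))`, namely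
`a_Q / (q^{deg Q} + 1)`. -/
noncomputable def localCoeff (e1 e2 : ℤ) (P Q : Fq[X]) : ℝ :=
  aQ e1 e2 P Q / ((Fintype.card Fq : ℝ) ^ Q.natDegree + 1)

/-- The coefficient `c_k(P)` of `u^k` in the Euler product `∏_Q (1 + v_P(Q) u^{deg Q})`; only the
primes of degree at most `k` contribute to it. -/
noncomputable def eulerCoeff (e1 e2 : ℤ) (P : Fq[X]) (k : ℕ) : ℝ :=
  (eulerPoly (localCoeff e1 e2 P) (primesUpTo Fq k)).coeff k

theorem monic_and_irreducible_of_mem_primesUpTo {N : ℕ} {Q : Fq[X]} (hQ : Q ∈ primesUpTo Fq N) :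
    Q.Monic ∧ Irreducible Q :=
  ⟨(mem_primesUpTo.1 hQ).1, (mem_primesUpTo.1 hQ).2.1⟩

theorem abs_localCoeff_le (he1 : |e1| ≤ 1) (he2 : |e2| ≤ 1) (P Q : Fq[X]) :
    |localCoeff e1 e2 P Q| ≤ 2 / ((Fintype.card Fq : ℝ) ^ Q.natDegree + 1) := by
  rw [localCoeff, abs_div, abs_of_pos (a := _ + (1 : ℝ)) (by positivity)]
  gcongr
  exact abs_aQ_le_two he1 he2 P Q

theorem abs_localCoeff_le_two_mul_inv_pow (he1 : |e1| ≤ 1) (he2 : |e2| ≤ 1) (P Q : Fq[X]) :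
    |localCoeff e1 e2 P Q| ≤ 2 * ((Fintype.card Fq : ℝ)⁻¹) ^ Q.natDegree := by
  refine (abs_localCoeff_le he1 he2 P Q).trans ?_
  rw [inv_pow, ← div_eq_mul_inv]
  gcongr
  exact le_add_of_nonneg_right zero_le_one

theorem abs_coeff_eulerPoly_localCoeff_le (he1 : |e1| ≤ 1) (he2 : |e2| ≤ 1) (P : Fq[X])
    (k N : ℕ) : |(eulerPoly (localCoeff e1 e2 P) (primesUpTo Fq N)).coeff k| ≤ k + 1 :=
  abs_coeff_eulerPoly_le (fun _ => monic_and_irreducible_of_mem_primesUpTo)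
    (fun Q _ => abs_localCoeff_le_two_mul_inv_pow he1 he2 P Q) k

theorem pairwiseDisjoint_primesOfDegree (s : Set ℕ) :
    s.PairwiseDisjoint (primesOfDegree Fq) := fun j _ k _ hjk => by
  rw [Function.onFun, Finset.disjoint_left]
  exact fun Q hj hk =>
    hjk ((mem_primesOfDegree.1 hj).2.2.symm.trans (mem_primesOfDegree.1 hk).2.2)

theorem sum_primesUpTo {M : Type*} [AddCommMonoid M] (N : ℕ) (g : Fq[X] → M) :
    ∑ Q ∈ primesUpTo Fq N, g Q = ∑ d ∈ Finset.range (N + 1), ∑ Q ∈ primesOfDegree Fq d, g Q :=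
  Finset.sum_biUnion (pairwiseDisjoint_primesOfDegree _)

end EulerCoeff

section Tail

/-- A coefficientwise majorant of the product of an Euler factor at a prime of degree `d` and norm
`m` with the corresponding factors of the two inverse `L`-series. -/
noncomputable def localMajorant (m : ℝ) (d : ℕ) : ℝ[X] :=
  1 + C (2 * m⁻¹ ^ 2) * X ^ d + C (5 * m⁻¹ ^ 2) * X ^ (2 * d) + C (2 * m⁻¹ ^ 3) * X ^ (3 * d)

theorem euler_factor_mul_expand {m : ℝ} (hm : 0 < m) (x y : ℝ) (d : ℕ) :
    ((1 + C ((x + y) / (m + 1)) * X ^ d) * (1 + C (-(x * m⁻¹)) * X ^ d) *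
      (1 + C (-(y * m⁻¹)) * X ^ d) : ℝ[X]) =
    1 + C (-((x + y) * (m⁻¹ * (m + 1)⁻¹))) * X ^ d +
      C (x * m⁻¹ * (y * m⁻¹) - (x + y) / (m + 1) * (x * m⁻¹ + y * m⁻¹)) * X ^ (2 * d) +
      C ((x + y) / (m + 1) * (x * m⁻¹ * (y * m⁻¹))) * X ^ (3 * d) := by
  have hlinear : -((x + y) * (m⁻¹ * (m + 1)⁻¹)) = (x + y) / (m + 1) - x * m⁻¹ - y * m⁻¹ := by
    field_simp
    ring
  simp only [hlinear, C_mul, C_sub, C_neg, C_add]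
  ring

theorem coeffDominated_localMajorant {m x y : ℝ} (hm : 0 < m) (hx : |x| ≤ 1) (hy : |y| ≤ 1)
    (d : ℕ) :
    CoeffDominated ((1 + C ((x + y) / (m + 1)) * X ^ d) * (1 + C (-(x * m⁻¹)) * X ^ d) *
      (1 + C (-(y * m⁻¹)) * X ^ d)) (localMajorant m d) := by
  have hinv : 0 < m⁻¹ := by positivity
  have hxm : |x * m⁻¹| ≤ m⁻¹ := by
    rw [abs_mul, abs_of_pos hinv]
    exact mul_le_of_le_one_left hinv.le hx
  have hym : |y * m⁻¹| ≤ m⁻¹ := by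
    rw [abs_mul, abs_of_pos hinv]
    exact mul_le_of_le_one_left hinv.le hy
  have hxy : |x + y| ≤ 2 := (abs_add_le x y).trans (by linarith)
  have hsum : |(x + y) / (m + 1)| ≤ 2 * m⁻¹ := by
    rw [abs_div, abs_of_pos (a := m + 1) (by positivity), ← div_eq_mul_inv]
    gcongr
    linarith
  have hxym : |x * m⁻¹ * (y * m⁻¹)| ≤ m⁻¹ ^ 2 := by
    rw [abs_mul, sq]
    gcongr
  rw [euler_factor_mul_expand hm]
  refine ((CoeffDominated.one.add (.C_mul_X_pow ?_ _)).add (.C_mul_X_pow ?_ _)).add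
    (.C_mul_X_pow ?_ _)
  · rw [abs_neg, abs_mul, abs_of_pos (a := m⁻¹ * (m + 1)⁻¹) (by positivity), sq]
    gcongr
    linarith
  · have hcross : |(x + y) / (m + 1) * (x * m⁻¹ + y * m⁻¹)| ≤ 2 * m⁻¹ * (2 * m⁻¹) := by
      rw [abs_mul]
      gcongr
      linarith [abs_add_le (x * m⁻¹) (y * m⁻¹)]
    refine (abs_sub _ _).trans ?_
    linarith
  · calc |(x + y) / (m + 1) * (x * m⁻¹ * (y * m⁻¹))| ≤ 2 * m⁻¹ * m⁻¹ ^ 2 := by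
          rw [abs_mul]
          gcongr
      _ = 2 * m⁻¹ ^ 3 := by ring

theorem eval_localMajorant_nonneg {m R : ℝ} (hm : 0 ≤ m) (hR : 0 ≤ R) (d : ℕ) :
    0 ≤ (localMajorant m d).eval R := by
  simp only [localMajorant, eval_add, eval_one, eval_mul, eval_C, eval_pow, eval_X]
  positivity

theorem eval_localMajorant_le_exp {R : ℝ} (hR : 1 ≤ R) (d : ℕ) :
    (localMajorant ((R ^ 4) ^ d) d).eval R ≤ Real.exp (9 * ((R ^ 6)⁻¹) ^ d) := by
  set r := R ^ d with hr
  have hr_one : 1 ≤ r := one_le_pow₀ hR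
  have hlinear : (r ^ 4)⁻¹ ^ 2 * r ≤ (r ^ 6)⁻¹ :=
    calc (r ^ 4)⁻¹ ^ 2 * r = (r ^ 7)⁻¹ := by field_simp
      _ ≤ (r ^ 6)⁻¹ := by gcongr; norm_num
  have hquadratic : (r ^ 4)⁻¹ ^ 2 * r ^ 2 = (r ^ 6)⁻¹ := by field_simp
  have hcubic : (r ^ 4)⁻¹ ^ 3 * r ^ 3 ≤ (r ^ 6)⁻¹ :=
    calc (r ^ 4)⁻¹ ^ 3 * r ^ 3 = (r ^ 9)⁻¹ := by field_simp
      _ ≤ (r ^ 6)⁻¹ := by gcongr; norm_num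
  simp only [localMajorant, eval_add, eval_one, eval_mul, eval_C, eval_pow, eval_X, inv_pow,
    pow_right_comm R _ d, mul_comm _ d, pow_mul, ← hr]
  simp only [inv_pow] at hlinear hquadratic hcubic
  linarith [Real.add_one_le_exp (9 * (r ^ 6)⁻¹)]

variable {Fq : Type*} [Field Fq] [Fintype Fq] {e1 e2 : ℤ} {P : Fq[X]} {R : ℝ}

theorem sum_primesUpTo_pow_le (hR : 1 < R) (hR4 : R ^ 4 = Fintype.card Fq) (N : ℕ) :
    ∑ Q ∈ primesUpTo Fq N, ((R ^ 6)⁻¹) ^ Q.natDegree ≤ (1 - (R ^ 2)⁻¹)⁻¹ := by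
  have hlt : (R ^ 2)⁻¹ < 1 := inv_lt_one_of_one_lt₀ (one_lt_pow₀ hR two_ne_zero)
  rw [sum_primesUpTo, ← tsum_geometric_of_lt_one (by positivity) hlt]
  refine le_trans (Finset.sum_le_sum fun d _ => ?_) ((summable_geometric_of_lt_one (by positivity)
    hlt).sum_le_tsum (Finset.range (N + 1)) fun i _ => by positivity)
  have hterm : ∀ Q ∈ primesOfDegree Fq d, ((R ^ 6)⁻¹) ^ Q.natDegree = ((R ^ 6)⁻¹) ^ d :=
    fun Q hQ => by rw [(mem_primesOfDegree.1 hQ).2.2]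
  have hcard : ((primesOfDegree Fq d).card : ℝ) ≤ (R ^ 4) ^ d := by
    rw [hR4]
    exact_mod_cast card_primesOfDegree_le d
  calc ∑ Q ∈ primesOfDegree Fq d, ((R ^ 6)⁻¹) ^ Q.natDegree
      = (primesOfDegree Fq d).card * ((R ^ 6)⁻¹) ^ d := by
        rw [Finset.sum_congr rfl hterm, Finset.sum_const, nsmul_eq_mul]
    _ ≤ (R ^ 4) ^ d * ((R ^ 6)⁻¹) ^ d := by gcongr
    _ = ((R ^ 2)⁻¹) ^ d := by
        rw [← mul_pow]
        congr 1
        field_simp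

theorem eval_prod_localMajorant_le (hR : 1 < R) (hR4 : R ^ 4 = Fintype.card Fq) (N : ℕ) :
    (∏ Q ∈ primesUpTo Fq N,
      localMajorant ((Fintype.card Fq : ℝ) ^ Q.natDegree) Q.natDegree).eval R ≤
      Real.exp (9 * (1 - (R ^ 2)⁻¹)⁻¹) :=
  calc _ = ∏ Q ∈ primesUpTo Fq N, (localMajorant ((R ^ 4) ^ Q.natDegree) Q.natDegree).eval R := by
        rw [eval_prod, hR4]
    _ ≤ ∏ Q ∈ primesUpTo Fq N, Real.exp (9 * ((R ^ 6)⁻¹) ^ Q.natDegree) :=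
        Finset.prod_le_prod
          (fun Q _ => eval_localMajorant_nonneg (by positivity) (by positivity) _)
          fun Q _ => eval_localMajorant_le_exp hR.le _
    _ ≤ Real.exp (9 * (1 - (R ^ 2)⁻¹)⁻¹) := by
        rw [← Real.exp_sum, ← Finset.mul_sum]
        gcongr
        exact sum_primesUpTo_pow_le hR hR4 N

theorem coeffDominated_prod_localMajorant (he1 : |e1| ≤ 1) (he2 : |e2| ≤ 1) (P : Fq[X])
    (S : Finset Fq[X]) :
    CoeffDominated
      (eulerPoly (localCoeff e1 e2 P) S * eulerPoly (fun Q => -normalizedChi e1 P Q) S *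
        eulerPoly (fun Q => -normalizedChi e2 P Q) S)
      (∏ Q ∈ S, localMajorant ((Fintype.card Fq : ℝ) ^ Q.natDegree) Q.natDegree) := by
  simp only [eulerPoly, ← Finset.prod_mul_distrib]
  refine CoeffDominated.prod fun Q _ => ?_
  simp only [localCoeff, aQ_eq_twistedChi_add, normalizedChi, inv_pow]
  exact coeffDominated_localMajorant (by positivity) (abs_twistedChi_le_one he1 P Q)
    (abs_twistedChi_le_one he2 P Q) _

theorem eulerCoeff_eq_coeff_mul_lPoly (hodd : Odd (Fintype.card Fq)) (hP : Irreducible P)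
    (e1 e2 : ℤ) (k : ℕ) :
    eulerCoeff e1 e2 P k = (eulerPoly (localCoeff e1 e2 P) (primesUpTo Fq k) *
        eulerPoly (fun Q => -normalizedChi e1 P Q) (primesUpTo Fq k) *
        eulerPoly (fun Q => -normalizedChi e2 P Q) (primesUpTo Fq k) *
        (lPoly e1 P * lPoly e2 P)).coeff k := by
  have hL1 := X_pow_dvd_eulerPoly_normalizedChi_mul_lPoly_sub_one hodd hP e1 k
  have hL2 := X_pow_dvd_eulerPoly_normalizedChi_mul_lPoly_sub_one hodd hP e2 k
  rw [eulerCoeff]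
  generalize eulerPoly (localCoeff e1 e2 P) (primesUpTo Fq k) = D,
    eulerPoly (fun Q => -normalizedChi e1 P Q) (primesUpTo Fq k) = E1,
    eulerPoly (fun Q => -normalizedChi e2 P Q) (primesUpTo Fq k) = E2 at hL1 hL2 ⊢
  have hdvd : X ^ (k + 1) ∣ D * E1 * E2 * (lPoly e1 P * lPoly e2 P) - D := by
    have hsplit : D * E1 * E2 * (lPoly e1 P * lPoly e2 P) - D =
        D * (E2 * lPoly e2 P) * (E1 * lPoly e1 P - 1) + D * (E2 * lPoly e2 P - 1) := by ring
    rw [hsplit]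
    exact dvd_add (hL1.mul_left _) (hL2.mul_left _)
  have hcoeff := X_pow_dvd_iff.1 hdvd k k.lt_succ_self
  rw [coeff_sub, sub_eq_zero] at hcoeff
  exact hcoeff.symm

theorem eval_sum_range_X_pow_le (hR : 1 ≤ R) (n : ℕ) :
    (∑ j ∈ Finset.range n, C 1 * X ^ j : ℝ[X]).eval R ≤ n * R ^ n := by
  simp only [eval_finsetSum, eval_mul, eval_C, eval_pow, eval_X, one_mul]
  calc ∑ j ∈ Finset.range n, R ^ j ≤ ∑ _j ∈ Finset.range n, R ^ n :=
        Finset.sum_le_sum fun j hj => pow_le_pow_right₀ hR (Finset.mem_range.1 hj).le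
    _ = n * R ^ n := by simp

theorem abs_eulerCoeff_mul_pow_le (hodd : Odd (Fintype.card Fq)) (hR : 1 < R)
    (hR4 : R ^ 4 = Fintype.card Fq) (he1 : |e1| ≤ 1) (he2 : |e2| ≤ 1) (hP : Irreducible P)
    (k : ℕ) :
    |eulerCoeff e1 e2 P k| * R ^ k ≤
      Real.exp (9 * (1 - (R ^ 2)⁻¹)⁻¹) * (P.natDegree * R ^ P.natDegree) ^ 2 := by
  have hdom := (coeffDominated_prod_localMajorant he1 he2 P (primesUpTo Fq k)).mul
    ((coeffDominated_lPoly he1 P).mul (coeffDominated_lPoly he2 P))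
  have hL_nonneg : 0 ≤ (∑ j ∈ Finset.range P.natDegree, C 1 * X ^ j : ℝ[X]).eval R := by
    simp only [eval_finsetSum, eval_mul, eval_C, eval_pow, eval_X, one_mul]
    positivity
  rw [eulerCoeff_eq_coeff_mul_lPoly hodd hP]
  refine (hdom.abs_coeff_mul_pow_le_eval (by positivity) k).trans ?_
  rw [eval_mul, eval_mul, ← sq]
  exact mul_le_mul (eval_prod_localMajorant_le hR hR4 k)
    (pow_le_pow_left₀ hL_nonneg (eval_sum_range_X_pow_le hR.le _) 2) (by positivity)
    (Real.exp_pos _).le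

end Tail

section Abel

open Filter Topology

variable {b : ℕ → ℝ} {B : ℝ}

theorem summable_mul_pow_of_abs_le (hb : ∀ d, |b d| ≤ B) {u : ℝ} (hu : u ∈ Set.Ioo 0 1) :
    Summable fun d => b d * u ^ d := by
  refine ((summable_geometric_of_lt_one hu.1.le hu.2).mul_left B).of_norm_bounded fun d => ?_
  rw [Real.norm_eq_abs, abs_mul, abs_of_nonneg (pow_nonneg hu.1.le d)]
  exact mul_le_mul_of_nonneg_right (hb d) (pow_nonneg hu.1.le d)

theorem pow_mul_sum_range_le {c : ℕ → ℝ} {u : ℝ} (hu : u ∈ Set.Icc 0 1)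
    (h : ∀ N, 0 ≤ ∑ d ∈ Finset.range N, c d) (N : ℕ) :
    u ^ N * ∑ d ∈ Finset.range N, c d ≤ ∑ d ∈ Finset.range N, c d * u ^ d := by
  induction N with
  | zero => simp
  | succ N ih =>
    have hpow : u ^ (N + 1) ≤ u ^ N := pow_le_pow_of_le_one hu.1 hu.2 N.le_succ
    refine (mul_le_mul_of_nonneg_right hpow (h (N + 1))).trans ?_
    rw [Finset.sum_range_succ, Finset.sum_range_succ, mul_add]
    linarith

theorem sum_range_mul_pow_le_of_sum_range_le {b' : ℕ → ℝ} {u : ℝ} (hu : u ∈ Set.Icc 0 1)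
    (h : ∀ N, ∑ d ∈ Finset.range N, b d ≤ ∑ d ∈ Finset.range N, b' d) (N : ℕ) :
    ∑ d ∈ Finset.range N, b d * u ^ d ≤ ∑ d ∈ Finset.range N, b' d * u ^ d := by
  have hdiff (N : ℕ) : 0 ≤ ∑ d ∈ Finset.range N, (b' d - b d) := by
    rw [Finset.sum_sub_distrib]
    exact sub_nonneg.2 (h N)
  have hle := (mul_nonneg (pow_nonneg hu.1 N) (hdiff N)).trans (pow_mul_sum_range_le hu hdiff N)
  simpa only [sub_mul, Finset.sum_sub_distrib, sub_nonneg] using hle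

theorem tsum_mul_pow_le_of_sum_range_le {b' : ℕ → ℝ} (hb : ∀ d, |b d| ≤ B)
    (hb' : ∀ d, |b' d| ≤ B) (h : ∀ N, ∑ d ∈ Finset.range N, b d ≤ ∑ d ∈ Finset.range N, b' d)
    {u : ℝ} (hu : u ∈ Set.Ioo 0 1) : ∑' d, b d * u ^ d ≤ ∑' d, b' d * u ^ d :=
  le_of_tendsto_of_tendsto' (summable_mul_pow_of_abs_le hb hu).hasSum.tendsto_sum_nat
    (summable_mul_pow_of_abs_le hb' hu).hasSum.tendsto_sum_nat
    (sum_range_mul_pow_le_of_sum_range_le (Set.Ioo_subset_Icc_self hu) h)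

-- Cutting the partial sums off at a level `T` below gives a series that sums to `T`, to which
-- Abel's theorem applies, and whose power series dominates the given one.
theorem tendsto_tsum_mul_pow_atBot (hb : ∀ d, |b d| ≤ B)
    (h : Tendsto (fun N => ∑ d ∈ Finset.range N, b d) atTop atBot) :
    Tendsto (fun u : ℝ => ∑' d, b d * u ^ d) (𝓝[<] 1) atBot := by
  refine tendsto_atBot.2 fun T₀ => ?_
  set T : ℝ := min (T₀ - 1) 0
  let s (N : ℕ) : ℝ := max (∑ d ∈ Finset.range N, b d) T
  let b' (d : ℕ) : ℝ := s (d + 1) - s d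
  have hsum (N : ℕ) : ∑ d ∈ Finset.range N, b' d = s N := by
    have hzero : s 0 = 0 := by simp [s, T]
    rw [Finset.sum_range_sub, hzero, sub_zero]
  have hb' (d : ℕ) : |b' d| ≤ B := by
    refine (abs_max_sub_max_le_abs _ _ _).trans ?_
    rw [Finset.sum_range_succ, add_sub_cancel_left]
    exact hb d
  have hlim : Tendsto (fun N => ∑ d ∈ Finset.range N, b' d) atTop (𝓝 T) := by
    refine tendsto_const_nhds.congr' ?_
    filter_upwards [h.eventually_le_atBot T] with N hN
    rw [hsum]
    exact (max_eq_right hN).symm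
  have hT : T < T₀ := (min_le_left _ _).trans_lt (sub_one_lt T₀)
  filter_upwards [(Real.tendsto_tsum_powerSeries_nhdsWithin_lt hlim).eventually_le_const hT,
    Ioo_mem_nhdsLT zero_lt_one] with u hle hu
  exact (tsum_mul_pow_le_of_sum_range_le hb hb' (fun N => (hsum N).symm ▸ le_max_left _ _) hu).trans
    hle

theorem tendsto_exp_tsum_mul_pow (hb : ∀ d, |b d| ≤ B) {a : ℝ}
    (h : Tendsto (fun N => Real.exp (∑ d ∈ Finset.range N, b d)) atTop (𝓝 a)) :
    Tendsto (fun u : ℝ => Real.exp (∑' d, b d * u ^ d)) (𝓝[<] 1) (𝓝 a) := by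
  have ha : 0 ≤ a := ge_of_tendsto' h fun N => (Real.exp_pos _).le
  rcases ha.eq_or_lt with rfl | hpos
  · rw [Real.tendsto_exp_comp_nhds_zero] at h ⊢
    exact tendsto_tsum_mul_pow_atBot hb h
  · have hlog := (Real.continuousAt_log hpos.ne').tendsto.comp h
    simp only [Function.comp_def, Real.log_exp] at hlog
    have hexp := (Real.continuous_exp.tendsto _).comp
      (Real.tendsto_tsum_powerSeries_nhdsWithin_lt hlog)
    rwa [Real.exp_log hpos] at hexp

theorem tendsto_of_tendsto_exp_sum {l : ℕ → ℝ → ℝ} {r : ℕ → ℝ} {g : ℝ → ℝ} {a : ℝ}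
    (hb : ∀ d, |b d| ≤ B) (hr : Summable r)
    (hl : ∀ d, ∀ u ∈ Set.Icc (0 : ℝ) 1, |l d u - b d * u ^ d| ≤ r d)
    (hcont : ∀ d, ContinuousOn (l d) (Set.Icc 0 1))
    (hg : ∀ u ∈ Set.Ioo (0 : ℝ) 1,
      Tendsto (fun N => Real.exp (∑ d ∈ Finset.range N, l d u)) atTop (𝓝 (g u)))
    (ha : Tendsto (fun N => Real.exp (∑ d ∈ Finset.range N, l d 1)) atTop (𝓝 a)) :
    Tendsto g (𝓝[<] 1) (𝓝 a) := by
  let ρ (u : ℝ) : ℝ := ∑' d, (l d u - b d * u ^ d)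
  have hρ_sum (u : ℝ) (hu : u ∈ Set.Icc (0 : ℝ) 1) :
      Tendsto (fun N => ∑ d ∈ Finset.range N, (l d u - b d * u ^ d)) atTop (𝓝 (ρ u)) :=
    (hr.of_norm_bounded fun d => hl d u hu).hasSum.tendsto_sum_nat
  have hρ_cont : ContinuousOn ρ (Set.Icc 0 1) :=
    continuousOn_tsum (fun d => (hcont d).sub (by fun_prop)) hr hl
  have hρ : Tendsto ρ (𝓝[<] 1) (𝓝 (ρ 1)) := by
    refine (hρ_cont 1 (Set.right_mem_Icc.2 zero_le_one)).mono_left (nhdsWithin_le_iff.2 ?_)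
    filter_upwards [Ioo_mem_nhdsLT zero_lt_one] with u hu using Set.Ioo_subset_Icc_self hu
  have hmain : Tendsto (fun N => Real.exp (∑ d ∈ Finset.range N, b d)) atTop
      (𝓝 (a * Real.exp (-ρ 1))) := by
    refine (ha.mul ((Real.continuous_exp.tendsto _).comp
      (hρ_sum 1 (Set.right_mem_Icc.2 zero_le_one)).neg)).congr fun N => ?_
    simp [← Real.exp_add, Finset.sum_sub_distrib]
  have hlim := (tendsto_exp_tsum_mul_pow hb hmain).mul ((Real.continuous_exp.tendsto _).comp hρ)
  rw [mul_assoc, ← Real.exp_add, neg_add_cancel, Real.exp_zero, mul_one] at hlim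
  refine hlim.congr' ?_
  filter_upwards [Ioo_mem_nhdsLT zero_lt_one] with u hu
  have hlim_u := (Real.continuous_exp.tendsto _).comp
    ((summable_mul_pow_of_abs_le hb hu).hasSum.tendsto_sum_nat.add
      (hρ_sum u (Set.Ioo_subset_Icc_self hu)))
  rw [Real.exp_add] at hlim_u
  refine tendsto_nhds_unique hlim_u ((hg u hu).congr fun N => ?_)
  simp [Finset.sum_sub_distrib]

end Abel

section EulerProductLimit

open Filter Topology

theorem eval_eq_tsum_coeff (f : ℝ[X]) (u : ℝ) : f.eval u = ∑' k, f.coeff k * u ^ k := by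
  rw [eval_eq_sum_range, tsum_eq_sum]
  intro k hk
  rw [Finset.mem_range, not_lt] at hk
  rw [coeff_eq_zero_of_natDegree_lt (by lia), zero_mul]

theorem tendsto_eval_of_abs_coeff_mul_pow_le {f : ℕ → ℝ[X]} {c bound : ℕ → ℝ} {u : ℝ}
    (hu : 0 ≤ u) (hbound : Summable bound) (hle : ∀ N k, |(f N).coeff k| * u ^ k ≤ bound k)
    (hcoeff : ∀ N, ∀ k ≤ N, (f N).coeff k = c k) :
    Tendsto (fun N => (f N).eval u) atTop (𝓝 (∑' k, c k * u ^ k)) := by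
  simp only [eval_eq_tsum_coeff]
  refine tendsto_tsum_of_dominated_convergence hbound (fun k => ?_) (.of_forall fun N k => ?_)
  · refine tendsto_const_nhds.congr' ?_
    filter_upwards [eventually_ge_atTop k] with N hN
    rw [hcoeff N k hN]
  · rw [Real.norm_eq_abs, abs_mul, abs_of_nonneg (pow_nonneg hu k)]
    exact hle N k

/-- The completely multiplicative weight `s^{deg F}`, with value `0` at `F = 0`. -/
noncomputable def degreeWeight {F : Type*} [Field F] (s : ℝ) (f : F[X]) : ℝ :=
  if f = 0 then 0 else s ^ f.natDegree

theorem degreeWeight_of_ne_zero {F : Type*} [Field F] (s : ℝ) {f : F[X]} (hf : f ≠ 0) :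
    degreeWeight s f = s ^ f.natDegree :=
  if_neg hf

theorem degreeWeight_mul {F : Type*} [Field F] (s : ℝ) (f g : F[X]) :
    degreeWeight s (f * g) = degreeWeight s f * degreeWeight s g := by
  rcases eq_or_ne f 0 with rfl | hf
  · simp [degreeWeight]
  rcases eq_or_ne g 0 with rfl | hg
  · simp [degreeWeight]
  rw [degreeWeight_of_ne_zero s hf, degreeWeight_of_ne_zero s hg,
    degreeWeight_of_ne_zero s (mul_ne_zero hf hg), natDegree_mul hf hg, pow_add]

variable {Fq : Type*} [Field Fq] [Fintype Fq]

theorem sum_degreeWeight_monicsOfDegree (s : ℝ) (k : ℕ) :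
    ∑ F ∈ monicsOfDegree Fq k, degreeWeight s F = (Fintype.card Fq * s) ^ k := by
  have hterm : ∀ F ∈ monicsOfDegree Fq k, degreeWeight s F = s ^ k := fun F hF => by
    obtain ⟨hmonic, hdeg⟩ := mem_monicsOfDegree.1 hF
    rw [degreeWeight_of_ne_zero s hmonic.ne_zero, hdeg]
  rw [Finset.sum_congr rfl hterm, Finset.sum_const, card_monicsOfDegree, nsmul_eq_mul,
    Nat.cast_pow, mul_pow]

theorem coeff_eulerPoly_neg_degreeWeight (s : ℝ) {k N : ℕ} (hk : k ≤ N) :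
    (eulerPoly (fun Q : Fq[X] => -degreeWeight s Q) (primesUpTo Fq N)).coeff k =
      (1 - C (Fintype.card Fq * s) * X : ℝ[X]).coeff k := by
  set x : ℝ := Fintype.card Fq * s
  set L : ℝ[X] := ∑ j ∈ Finset.range (N + 1), (C x * X) ^ j
  have hL : ∀ j ≤ N, L.coeff j = ∑ F ∈ monicsOfDegree Fq j, degreeWeight s F := fun j hj => by
    simp only [L, mul_pow, ← C_pow, finsetSum_coeff, coeff_C_mul_X_pow]
    rw [Finset.sum_ite_eq, if_pos (Finset.mem_range.2 (by lia)), sum_degreeWeight_monicsOfDegree]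
  have hsieve := X_pow_dvd_eulerPoly_neg_mul_sub_one (degreeWeight_mul s)
    (by simp [degreeWeight]) hL
  set E := eulerPoly (fun Q : Fq[X] => -degreeWeight s Q) (primesUpTo Fq N)
  have hgeom : (1 - C x * X) * L = 1 - (C x * X) ^ (N + 1) := mul_neg_geom_sum _ _
  have hdvd : X ^ (N + 1) ∣ E - (1 - C x * X) := by
    have hsplit : E - (1 - C x * X) =
        (1 - C x * X) * (E * L - 1) + E * (1 - (1 - C x * X) * L) := by ring
    rw [hsplit, hgeom, sub_sub_cancel, mul_pow]
    exact dvd_add (hsieve.mul_left _) ((dvd_mul_left _ _).mul_left _)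
  have hcoeff := X_pow_dvd_iff.1 hdvd k (by lia)
  rwa [coeff_sub, sub_eq_zero] at hcoeff

theorem abs_coeff_eulerPoly_neg_degreeWeight_le {s : ℝ} (hs : 0 ≤ s) (k N : ℕ) :
    |(eulerPoly (fun Q : Fq[X] => -degreeWeight s Q) (primesUpTo Fq N)).coeff k| ≤
      (Fintype.card Fq * s) ^ k := by
  have hdom : CoeffDominated
      (eulerPoly (fun Q : Fq[X] => -degreeWeight s Q) (primesUpTo Fq N))
      (eulerPoly (fun Q => s ^ Q.natDegree) (primesUpTo Fq N)) := by
    refine CoeffDominated.prod fun Q hQ => CoeffDominated.one.add (.C_mul_X_pow ?_ _)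
    rw [abs_neg, degreeWeight_of_ne_zero s (mem_primesUpTo.1 hQ).1.ne_zero,
      abs_of_nonneg (pow_nonneg hs _)]
  exact (hdom k).trans
    (coeff_eulerPoly_pow_natDegree_le hs (fun _ => monic_and_irreducible_of_mem_primesUpTo) k)

theorem tendsto_prod_primesUpTo_one_sub_pow {s : ℝ} (hs : 0 ≤ s) (hs' : Fintype.card Fq * s < 1) :
    Tendsto (fun N => ∏ Q ∈ primesUpTo Fq N, (1 - s ^ Q.natDegree)) atTop
      (𝓝 (1 - Fintype.card Fq * s)) := by
  have hlim := tendsto_eval_of_abs_coeff_mul_pow_le (u := 1) zero_le_one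
    (summable_geometric_of_lt_one (by positivity) hs')
    (fun N k => by
      rw [one_pow, mul_one]
      exact abs_coeff_eulerPoly_neg_degreeWeight_le (Fq := Fq) hs k N)
    (fun N k hk => coeff_eulerPoly_neg_degreeWeight s hk)
  rw [← eval_eq_tsum_coeff] at hlim
  simp only [eval_sub, eval_one, eval_mul, eval_C, eval_X, mul_one] at hlim
  refine hlim.congr fun N => ?_
  rw [eulerPoly, eval_prod]
  refine Finset.prod_congr rfl fun Q hQ => ?_
  simp [degreeWeight_of_ne_zero s (mem_primesUpTo.1 hQ).1.ne_zero, sub_eq_add_neg]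

theorem prod_primesUpTo {M : Type*} [CommMonoid M] (N : ℕ) (g : Fq[X] → M) :
    ∏ Q ∈ primesUpTo Fq N, g Q = ∏ d ∈ Finset.range (N + 1), ∏ Q ∈ primesOfDegree Fq d, g Q :=
  Finset.prod_biUnion (pairwiseDisjoint_primesOfDegree _)

theorem one_add_deltaP_eq (e1 e2 : ℤ) (P Q : Fq[X]) :
    1 + deltaP (Fintype.card Fq) e1 e2 P Q =
      (1 - ((Fintype.card Fq : ℝ)⁻¹ ^ 2) ^ Q.natDegree) * (1 + localCoeff e1 e2 P Q) := by
  rw [deltaP, localCoeff, pow_right_comm, inv_pow, mul_comm 2, pow_mul]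
  field_simp
  ring

theorem abs_log_one_add_sub_self_le {x : ℝ} (hx : |x| ≤ 1 / 2) :
    |Real.log (1 + x) - x| ≤ 2 * x ^ 2 := by
  have h := Real.abs_log_sub_add_sum_range_le (x := -x) (by rw [abs_neg]; linarith) 1
  simp only [Finset.sum_range_one, zero_add, pow_one, Nat.cast_zero, div_one, sub_neg_eq_add,
    abs_neg, Nat.reduceAdd, sq_abs] at h
  calc |Real.log (1 + x) - x| = |-x + Real.log (1 + x)| := by rw [sub_eq_neg_add]
    _ ≤ x ^ 2 / (1 - |x|) := h
    _ ≤ 2 * x ^ 2 := by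
        rw [div_le_iff₀ (by linarith)]
        nlinarith [sq_nonneg x]

theorem card_primesOfDegree_mul_inv_pow_le_one (d : ℕ) :
    ((primesOfDegree Fq d).card : ℝ) * ((Fintype.card Fq : ℝ)⁻¹) ^ d ≤ 1 := by
  rw [inv_pow, ← div_eq_mul_inv, div_le_one (by positivity)]
  exact_mod_cast card_primesOfDegree_le d

end EulerProductLimit

section EulerProductValue

open Filter Topology

variable {Fq : Type*} [Field Fq] [Fintype Fq] {e1 e2 : ℤ} {P Q : Fq[X]} {d : ℕ} {u R : ℝ}

theorem three_le_card_of_odd (hodd : Odd (Fintype.card Fq)) : 3 ≤ Fintype.card Fq := by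
  have hcard : 1 < Fintype.card Fq := Fintype.one_lt_card
  obtain ⟨m, hm⟩ := hodd
  lia

theorem abs_localCoeff_le_half (hodd : Odd (Fintype.card Fq)) (he1 : |e1| ≤ 1) (he2 : |e2| ≤ 1)
    (P : Fq[X]) (hQ : Irreducible Q) : |localCoeff e1 e2 P Q| ≤ 1 / 2 := by
  have hcard : (3 : ℝ) ≤ Fintype.card Fq := by exact_mod_cast three_le_card_of_odd hodd
  have hnorm : (3 : ℝ) ≤ (Fintype.card Fq : ℝ) ^ Q.natDegree :=
    hcard.trans (le_self_pow₀ (by linarith) hQ.natDegree_pos.ne')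
  refine (abs_localCoeff_le he1 he2 P Q).trans ?_
  rw [div_le_div_iff₀ (by linarith) two_pos]
  linarith

theorem abs_mul_pow_le_of_mem_Icc (x : ℝ) (hu : u ∈ Set.Icc 0 1) (d : ℕ) : |x * u ^ d| ≤ |x| := by
  rw [abs_mul, abs_of_nonneg (pow_nonneg hu.1 d)]
  exact mul_le_of_le_one_right (abs_nonneg _) (pow_le_one₀ hu.1 hu.2)

theorem one_add_localCoeff_mul_pow_pos (hodd : Odd (Fintype.card Fq)) (he1 : |e1| ≤ 1)
    (he2 : |e2| ≤ 1) (P : Fq[X]) (hQ : Irreducible Q) (hu : u ∈ Set.Icc 0 1) (d : ℕ) :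
    0 < 1 + localCoeff e1 e2 P Q * u ^ d := by
  have h := (abs_mul_pow_le_of_mem_Icc _ hu d).trans (abs_localCoeff_le_half hodd he1 he2 P hQ)
  linarith [(abs_le.1 h).1]

/-- The logarithm of the product of the Euler factors `1 + v_P(Q) u^{deg Q}` over the primes `Q`
of degree `d`. -/
noncomputable def logEulerFactor (e1 e2 : ℤ) (P : Fq[X]) (d : ℕ) (u : ℝ) : ℝ :=
  ∑ Q ∈ primesOfDegree Fq d, Real.log (1 + localCoeff e1 e2 P Q * u ^ d)

theorem exp_sum_logEulerFactor (hodd : Odd (Fintype.card Fq)) (he1 : |e1| ≤ 1) (he2 : |e2| ≤ 1)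
    (P : Fq[X]) (hu : u ∈ Set.Icc 0 1) (N : ℕ) :
    Real.exp (∑ d ∈ Finset.range (N + 1), logEulerFactor e1 e2 P d u) =
      (eulerPoly (localCoeff e1 e2 P) (primesUpTo Fq N)).eval u := by
  rw [eulerPoly, eval_prod, prod_primesUpTo, Real.exp_sum]
  refine Finset.prod_congr rfl fun d _ => ?_
  rw [logEulerFactor, Real.exp_sum]
  refine Finset.prod_congr rfl fun Q hQ => ?_
  obtain ⟨-, hQ, hdeg⟩ := mem_primesOfDegree.1 hQ
  rw [Real.exp_log (one_add_localCoeff_mul_pow_pos hodd he1 he2 P hQ hu d), hdeg]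
  simp

theorem continuousOn_logEulerFactor (hodd : Odd (Fintype.card Fq)) (he1 : |e1| ≤ 1)
    (he2 : |e2| ≤ 1) (P : Fq[X]) (d : ℕ) :
    ContinuousOn (logEulerFactor e1 e2 P d) (Set.Icc 0 1) :=
  continuousOn_finsetSum _ fun _ hQ => ContinuousOn.log (by fun_prop) fun _ hu =>
    (one_add_localCoeff_mul_pow_pos hodd he1 he2 P (mem_primesOfDegree.1 hQ).2.1 hu d).ne'

theorem abs_sum_localCoeff_primesOfDegree_le (he1 : |e1| ≤ 1) (he2 : |e2| ≤ 1) (P : Fq[X])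
    (d : ℕ) : |∑ Q ∈ primesOfDegree Fq d, localCoeff e1 e2 P Q| ≤ 2 :=
  calc |∑ Q ∈ primesOfDegree Fq d, localCoeff e1 e2 P Q|
      ≤ ∑ Q ∈ primesOfDegree Fq d, |localCoeff e1 e2 P Q| := Finset.abs_sum_le_sum_abs _ _
    _ ≤ ∑ Q ∈ primesOfDegree Fq d, 2 * ((Fintype.card Fq : ℝ)⁻¹) ^ d :=
        Finset.sum_le_sum fun Q hQ =>
          (mem_primesOfDegree.1 hQ).2.2 ▸ abs_localCoeff_le_two_mul_inv_pow he1 he2 P Q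
    _ ≤ 2 := by
        rw [Finset.sum_const, nsmul_eq_mul]
        linarith [card_primesOfDegree_mul_inv_pow_le_one (Fq := Fq) d]

theorem abs_logEulerFactor_sub_le (hodd : Odd (Fintype.card Fq)) (he1 : |e1| ≤ 1)
    (he2 : |e2| ≤ 1) (P : Fq[X]) (d : ℕ) (hu : u ∈ Set.Icc 0 1) :
    |logEulerFactor e1 e2 P d u - (∑ Q ∈ primesOfDegree Fq d, localCoeff e1 e2 P Q) * u ^ d| ≤
      8 * ((Fintype.card Fq : ℝ)⁻¹) ^ d := by
  set t : ℝ := (Fintype.card Fq : ℝ)⁻¹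
  have hterm : ∀ Q ∈ primesOfDegree Fq d,
      |Real.log (1 + localCoeff e1 e2 P Q * u ^ d) - localCoeff e1 e2 P Q * u ^ d| ≤
        8 * (t ^ d) ^ 2 := fun Q hQ => by
    obtain ⟨-, hQ, hdeg⟩ := mem_primesOfDegree.1 hQ
    have hle := abs_mul_pow_le_of_mem_Icc (localCoeff e1 e2 P Q) hu d
    have hle' := hle.trans (hdeg ▸ abs_localCoeff_le_two_mul_inv_pow he1 he2 P Q)
    calc _ ≤ 2 * (localCoeff e1 e2 P Q * u ^ d) ^ 2 :=
          abs_log_one_add_sub_self_le (hle.trans (abs_localCoeff_le_half hodd he1 he2 P hQ))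
      _ ≤ 2 * (2 * t ^ d) ^ 2 :=
          mul_le_mul_of_nonneg_left (sq_le_sq' (abs_le.1 hle').1 (abs_le.1 hle').2) zero_le_two
      _ = 8 * (t ^ d) ^ 2 := by ring
  rw [logEulerFactor, Finset.sum_mul, ← Finset.sum_sub_distrib]
  calc _ ≤ ∑ _Q ∈ primesOfDegree Fq d, 8 * (t ^ d) ^ 2 :=
        (Finset.abs_sum_le_sum_abs _ _).trans (Finset.sum_le_sum hterm)
    _ = (primesOfDegree Fq d).card * t ^ d * (8 * t ^ d) := by
        rw [Finset.sum_const, nsmul_eq_mul]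
        ring
    _ ≤ 8 * t ^ d :=
        mul_le_of_le_one_left (by positivity) (card_primesOfDegree_mul_inv_pow_le_one d)

theorem tendsto_eval_eulerPoly_localCoeff (he1 : |e1| ≤ 1) (he2 : |e2| ≤ 1) (P : Fq[X])
    (hu : u ∈ Set.Ioo 0 1) :
    Tendsto (fun N => (eulerPoly (localCoeff e1 e2 P) (primesUpTo Fq N)).eval u) atTop
      (𝓝 (∑' k, eulerCoeff e1 e2 P k * u ^ k)) := by
  have hnorm : ‖u‖ < 1 := by rw [Real.norm_eq_abs, abs_of_pos hu.1]; exact hu.2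
  have hsum : Summable fun k : ℕ => ((k : ℝ) + 1) * u ^ k := by
    refine ((summable_pow_mul_geometric_of_norm_lt_one 1 hnorm).add
      (summable_geometric_of_norm_lt_one hnorm)).congr fun k => ?_
    ring
  exact tendsto_eval_of_abs_coeff_mul_pow_le hu.1.le hsum
    (fun N k => mul_le_mul_of_nonneg_right (abs_coeff_eulerPoly_localCoeff_le he1 he2 P k N)
      (pow_nonneg hu.1.le k))
    (fun N k hk => coeff_eulerPoly_primesUpTo_of_le _ hk)

theorem tendsto_eval_one_eulerPoly_localCoeff {A : ℝ}
    (hA : Tendsto (fun N => ∏ Q ∈ primesUpTo Fq N, (1 + deltaP (Fintype.card Fq) e1 e2 P Q))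
      atTop (𝓝 A)) :
    Tendsto (fun N => (eulerPoly (localCoeff e1 e2 P) (primesUpTo Fq N)).eval 1) atTop
      (𝓝 (A / (1 - (Fintype.card Fq : ℝ)⁻¹))) := by
  have hcard : (1 : ℝ) < Fintype.card Fq := by exact_mod_cast Fintype.one_lt_card
  set t : ℝ := (Fintype.card Fq : ℝ)⁻¹ with ht_def
  have ht : 0 < t := by positivity
  have ht_lt : t < 1 := inv_lt_one_of_one_lt₀ hcard
  have hmul : (Fintype.card Fq : ℝ) * t ^ 2 = t := by rw [ht_def]; field_simp
  have hzeta := tendsto_prod_primesUpTo_one_sub_pow (Fq := Fq) (sq_nonneg t)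
    (hmul.trans_lt ht_lt)
  rw [hmul] at hzeta
  refine (hA.div hzeta (sub_pos.2 ht_lt).ne').congr fun N => ?_
  have hpos : 0 < ∏ Q ∈ primesUpTo Fq N, (1 - (t ^ 2) ^ Q.natDegree) :=
    Finset.prod_pos fun Q hQ => sub_pos.2 <|
      pow_lt_one₀ (sq_nonneg t) (pow_lt_one₀ ht.le ht_lt two_ne_zero)
        (mem_primesUpTo.1 hQ).2.1.natDegree_pos.ne'
  rw [Pi.div_apply, div_eq_iff hpos.ne', eulerPoly, eval_prod, ← Finset.prod_mul_distrib]
  refine Finset.prod_congr rfl fun Q _ => ?_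
  rw [one_add_deltaP_eq, mul_comm]
  simp [t]

theorem abs_eulerCoeff_le (hodd : Odd (Fintype.card Fq)) (hR : 1 < R)
    (hR4 : R ^ 4 = Fintype.card Fq) (he1 : |e1| ≤ 1) (he2 : |e2| ≤ 1) (hP : Irreducible P)
    (k : ℕ) :
    |eulerCoeff e1 e2 P k| ≤
      Real.exp (9 * (1 - (R ^ 2)⁻¹)⁻¹) * (P.natDegree * R ^ P.natDegree) ^ 2 * R⁻¹ ^ k := by
  rw [inv_pow, ← div_eq_mul_inv, le_div_iff₀ (by positivity)]
  exact abs_eulerCoeff_mul_pow_le hodd hR hR4 he1 he2 hP k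

theorem summable_abs_eulerCoeff (hodd : Odd (Fintype.card Fq)) (hR : 1 < R)
    (hR4 : R ^ 4 = Fintype.card Fq) (he1 : |e1| ≤ 1) (he2 : |e2| ≤ 1) (hP : Irreducible P) :
    Summable fun k => |eulerCoeff e1 e2 P k| :=
  .of_nonneg_of_le (fun _ => abs_nonneg _) (abs_eulerCoeff_le hodd hR hR4 he1 he2 hP)
    ((summable_geometric_of_lt_one (by positivity) (inv_lt_one_of_one_lt₀ hR)).mul_left _)

-- The Euler product converges absolutely only for `u < 1`; Abel summation carries the identity
-- with the power series over to `u = 1`.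
theorem eq_mul_tsum_eulerCoeff (hodd : Odd (Fintype.card Fq)) (he1 : |e1| ≤ 1) (he2 : |e2| ≤ 1)
    (hsum : Summable fun k => |eulerCoeff e1 e2 P k|) {A : ℝ}
    (hA : Tendsto (fun N => ∏ Q ∈ primesUpTo Fq N, (1 + deltaP (Fintype.card Fq) e1 e2 P Q))
      atTop (𝓝 A)) :
    A = (1 - (Fintype.card Fq : ℝ)⁻¹) * ∑' k, eulerCoeff e1 e2 P k := by
  have ht : (Fintype.card Fq : ℝ)⁻¹ < 1 :=
    inv_lt_one_of_one_lt₀ (by exact_mod_cast Fintype.one_lt_card)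
  have habel := Real.tendsto_tsum_powerSeries_nhdsWithin_lt
    (summable_abs_iff.1 hsum).hasSum.tendsto_sum_nat
  have hproduct := tendsto_of_tendsto_exp_sum
    (abs_sum_localCoeff_primesOfDegree_le he1 he2 P)
    ((summable_geometric_of_lt_one (by positivity) ht).mul_left 8)
    (fun d u hu => abs_logEulerFactor_sub_le hodd he1 he2 P d hu)
    (continuousOn_logEulerFactor hodd he1 he2 P)
    (fun u hu => (tendsto_add_atTop_iff_nat 1).1 <|
      (tendsto_eval_eulerPoly_localCoeff he1 he2 P hu).congr fun N =>
        (exp_sum_logEulerFactor hodd he1 he2 P (Set.Ioo_subset_Icc_self hu) N).symm)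
    ((tendsto_add_atTop_iff_nat 1).1 <|
      (tendsto_eval_one_eulerPoly_localCoeff hA).congr fun N =>
        (exp_sum_logEulerFactor hodd he1 he2 P (Set.right_mem_Icc.2 zero_le_one) N).symm)
  rw [tendsto_nhds_unique habel hproduct, mul_div_cancel₀ _ (sub_pos.2 ht).ne']

end EulerProductValue

section Average

variable {Fq : Type*} [Field Fq] [Fintype Fq] {e1 e2 : ℤ} {n : ℕ} {R : ℝ}

theorem eulerCoeff_zero (e1 e2 : ℤ) (P : Fq[X]) : eulerCoeff e1 e2 P 0 = 1 := by
  have hempty : primesUpTo Fq 0 = ∅ := Finset.eq_empty_of_forall_notMem fun Q hQ =>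
    (mem_primesUpTo.1 hQ).2.1.natDegree_pos.not_ge (mem_primesUpTo.1 hQ).2.2
  simp [eulerCoeff, hempty, eulerPoly]

/-- The part of `localCoeff e1 e2 P Q` that does not depend on `P`. -/
noncomputable def localWeight (e1 e2 : ℤ) (Q : Fq[X]) : ℝ :=
  ((e1 : ℝ) ^ Q.natDegree + (e2 : ℝ) ^ Q.natDegree) / ((Fintype.card Fq : ℝ) ^ Q.natDegree + 1)

theorem localCoeff_eq_localWeight_mul_chiP (e1 e2 : ℤ) (P Q : Fq[X]) :
    localCoeff e1 e2 P Q = localWeight e1 e2 Q * chiP P Q := by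
  simp only [localCoeff, localWeight, aQ]
  push_cast
  ring

theorem abs_localWeight_le (he1 : |e1| ≤ 1) (he2 : |e2| ≤ 1) (Q : Fq[X]) :
    |localWeight e1 e2 Q| ≤ 2 * ((Fintype.card Fq : ℝ)⁻¹) ^ Q.natDegree := by
  have hpow {e : ℤ} (he : |e| ≤ 1) : |(e : ℝ) ^ Q.natDegree| ≤ 1 := by
    rw [abs_pow]
    exact pow_le_one₀ (abs_nonneg _) (by exact_mod_cast he)
  have hnum : |(e1 : ℝ) ^ Q.natDegree + (e2 : ℝ) ^ Q.natDegree| ≤ 2 := by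
    linarith [abs_add_le ((e1 : ℝ) ^ Q.natDegree) ((e2 : ℝ) ^ Q.natDegree), hpow he1, hpow he2]
  rw [localWeight, abs_div, abs_of_pos (a := _ + (1 : ℝ)) (by positivity), inv_pow,
    ← div_eq_mul_inv]
  gcongr
  linarith

theorem sum_eulerCoeff_primesOfDegree (e1 e2 : ℤ) (n k : ℕ) :
    ∑ P ∈ primesOfDegree Fq n, eulerCoeff e1 e2 P k =
      ∑ T ∈ (primesUpTo Fq k).powerset with ∑ Q ∈ T, Q.natDegree = k,
        (∏ Q ∈ T, localWeight e1 e2 Q) * ∑ P ∈ primesOfDegree Fq n, (chiP P (∏ Q ∈ T, Q) : ℝ) := by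
  simp only [Finset.mul_sum]
  rw [Finset.sum_comm]
  refine Finset.sum_congr rfl fun P hP => ?_
  rw [eulerCoeff, coeff_eulerPoly]
  refine Finset.sum_congr rfl fun T _ => ?_
  rw [chiP_prod (mem_primesOfDegree.1 hP).2.1, Int.cast_prod, ← Finset.prod_mul_distrib]
  exact Finset.prod_congr rfl fun Q _ => localCoeff_eq_localWeight_mul_chiP e1 e2 P Q

theorem abs_sum_eulerCoeff_primesOfDegree_le (hodd : Odd (Fintype.card Fq)) (he1 : |e1| ≤ 1)
    (he2 : |e2| ≤ 1) (hn : n ≠ 0) {k : ℕ} (hk : 0 < k) :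
    |∑ P ∈ primesOfDegree Fq n, eulerCoeff e1 e2 P k| ≤
      25 * k * √((Fintype.card Fq : ℝ) ^ n) / n * (k + 1) := by
  have hterm : ∀ T ∈ (primesUpTo Fq k).powerset.filter (fun T => ∑ Q ∈ T, Q.natDegree = k),
      |(∏ Q ∈ T, localWeight e1 e2 Q) * ∑ P ∈ primesOfDegree Fq n, (chiP P (∏ Q ∈ T, Q) : ℝ)| ≤
        25 * k * √((Fintype.card Fq : ℝ) ^ n) / n * ∏ Q ∈ T, |localWeight e1 e2 Q| := by
    intro T hT
    obtain ⟨hsubset, hsum⟩ := Finset.mem_filter.1 hT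
    have hprime : ∀ Q ∈ T, Q.Monic ∧ Irreducible Q := fun Q hQ =>
      monic_and_irreducible_of_mem_primesUpTo (Finset.mem_powerset.1 hsubset hQ)
    have hdeg : (∏ Q ∈ T, Q).natDegree = k := by
      rw [natDegree_prod_of_monic _ _ fun Q hQ => (hprime Q hQ).1, hsum]
    have hchi := abs_sum_chiP_primesOfDegree_le hodd hn
      (squarefree_prod_of_monic_irreducible hprime) (hdeg ▸ hk)
    rw [hdeg] at hchi
    rw [abs_mul, mul_comm, Finset.abs_prod]
    exact mul_le_mul_of_nonneg_right hchi (Finset.prod_nonneg fun _ _ => abs_nonneg _)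
  have hweight := abs_coeff_eulerPoly_le (v := fun Q : Fq[X] => |localWeight e1 e2 Q|)
    (fun _ => monic_and_irreducible_of_mem_primesUpTo (N := k))
    (fun Q _ => (abs_abs _).trans_le (abs_localWeight_le he1 he2 Q)) k
  rw [coeff_eulerPoly] at hweight
  rw [sum_eulerCoeff_primesOfDegree]
  refine (Finset.abs_sum_le_sum_abs _ _).trans ((Finset.sum_le_sum hterm).trans ?_)
  rw [← Finset.mul_sum]
  exact mul_le_mul_of_nonneg_left ((le_abs_self _).trans hweight) (by positivity)

theorem abs_sum_Ico_sum_eulerCoeff_le (hodd : Odd (Fintype.card Fq)) (hR : 0 ≤ R)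
    (hR4 : R ^ 4 = Fintype.card Fq) (he1 : |e1| ≤ 1) (he2 : |e2| ≤ 1) (hn : n ≠ 0) :
    |∑ k ∈ Finset.Ico 1 (4 * n), ∑ P ∈ primesOfDegree Fq n, eulerCoeff e1 e2 P k| ≤
      1600 * ((n : ℝ) ^ 2 * R ^ (2 * n)) := by
  have hsqrt : √((Fintype.card Fq : ℝ) ^ n) = R ^ (2 * n) := by
    rw [← hR4, show (R ^ 4) ^ n = (R ^ (2 * n)) ^ 2 by ring, Real.sqrt_sq (by positivity)]
  have hterm : ∀ k ∈ Finset.Ico 1 (4 * n),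
      |∑ P ∈ primesOfDegree Fq n, eulerCoeff e1 e2 P k| ≤ 400 * (n * R ^ (2 * n)) := by
    intro k hk
    obtain ⟨hk_pos, hk_lt⟩ := Finset.mem_Ico.1 hk
    have hk_le : (k : ℝ) + 1 ≤ 4 * n := by exact_mod_cast hk_lt
    calc _ ≤ 25 * k * R ^ (2 * n) / n * (k + 1) :=
          hsqrt ▸ abs_sum_eulerCoeff_primesOfDegree_le hodd he1 he2 hn hk_pos
      _ ≤ 25 * (4 * n) * R ^ (2 * n) / n * (4 * n) := by
          gcongr
          linarith
      _ = 400 * (n * R ^ (2 * n)) := by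
          field_simp
          ring
  calc _ ≤ ∑ k ∈ Finset.Ico 1 (4 * n), 400 * (n * R ^ (2 * n)) :=
        (Finset.abs_sum_le_sum_abs _ _).trans (Finset.sum_le_sum hterm)
    _ = (4 * n - 1 : ℕ) * (400 * (n * R ^ (2 * n))) := by
        rw [Finset.sum_const, Nat.card_Ico, nsmul_eq_mul]
    _ ≤ (4 * n : ℕ) * (400 * (n * R ^ (2 * n))) := by
        gcongr
        exact Nat.sub_le _ _
    _ = 1600 * ((n : ℝ) ^ 2 * R ^ (2 * n)) := by
        push_cast
        ring

theorem abs_tsum_eulerCoeff_add_le (hodd : Odd (Fintype.card Fq)) (hR : 1 < R)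
    (hR4 : R ^ 4 = Fintype.card Fq) (he1 : |e1| ≤ 1) (he2 : |e2| ≤ 1) {P : Fq[X]}
    (hP : Irreducible P) (m : ℕ) :
    |∑' k, eulerCoeff e1 e2 P (k + m)| ≤
      Real.exp (9 * (1 - (R ^ 2)⁻¹)⁻¹) * (P.natDegree * R ^ P.natDegree) ^ 2 * R⁻¹ ^ m *
        (1 - R⁻¹)⁻¹ := by
  have hinv : R⁻¹ < 1 := inv_lt_one_of_one_lt₀ hR
  rw [← tsum_geometric_of_lt_one (by positivity) hinv, ← tsum_mul_left, ← Real.norm_eq_abs]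
  refine tsum_of_norm_bounded
    ((summable_geometric_of_lt_one (by positivity) hinv).mul_left _).hasSum fun k => ?_
  rw [Real.norm_eq_abs]
  refine (abs_eulerCoeff_le hodd hR hR4 he1 he2 hP (k + m)).trans_eq ?_
  ring

theorem abs_sum_tsum_eulerCoeff_add_le (hodd : Odd (Fintype.card Fq)) (hR : 1 < R)
    (hR4 : R ^ 4 = Fintype.card Fq) (he1 : |e1| ≤ 1) (he2 : |e2| ≤ 1) (n : ℕ) :
    |∑ P ∈ primesOfDegree Fq n, ∑' k, eulerCoeff e1 e2 P (k + 4 * n)| ≤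
      Real.exp (9 * (1 - (R ^ 2)⁻¹)⁻¹) * (1 - R⁻¹)⁻¹ * ((n : ℝ) ^ 2 * R ^ (2 * n)) := by
  have hinv : 0 < 1 - R⁻¹ := sub_pos.2 (inv_lt_one_of_one_lt₀ hR)
  have hcard : ((primesOfDegree Fq n).card : ℝ) ≤ R ^ (4 * n) := by
    rw [pow_mul, hR4]
    exact_mod_cast card_primesOfDegree_le n
  set B := Real.exp (9 * (1 - (R ^ 2)⁻¹)⁻¹)
  calc _ ≤ ∑ P ∈ primesOfDegree Fq n,
        B * (n * R ^ n) ^ 2 * R⁻¹ ^ (4 * n) * (1 - R⁻¹)⁻¹ :=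
        (Finset.abs_sum_le_sum_abs _ _).trans <| Finset.sum_le_sum fun P hP => by
          obtain ⟨-, hP, hdeg⟩ := mem_primesOfDegree.1 hP
          have hbound := abs_tsum_eulerCoeff_add_le hodd hR hR4 he1 he2 hP (4 * n)
          rwa [hdeg] at hbound
    _ = (primesOfDegree Fq n).card * (B * (n * R ^ n) ^ 2 * R⁻¹ ^ (4 * n) * (1 - R⁻¹)⁻¹) := by
        rw [Finset.sum_const, nsmul_eq_mul]
    _ ≤ R ^ (4 * n) * (B * (n * R ^ n) ^ 2 * R⁻¹ ^ (4 * n) * (1 - R⁻¹)⁻¹) := by gcongr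
    _ = B * (1 - R⁻¹)⁻¹ * ((n : ℝ) ^ 2 * R ^ (2 * n)) * (R ^ (4 * n) * R⁻¹ ^ (4 * n)) := by ring
    _ = B * (1 - R⁻¹)⁻¹ * ((n : ℝ) ^ 2 * R ^ (2 * n)) := by
        rw [← mul_pow, mul_inv_cancel₀ (by positivity), one_pow, mul_one]

/-- The constant in the error term `n² q^{n/2}`, as a function of `R = q^{1/4}`. -/
noncomputable def errorConst (R : ℝ) : ℝ :=
  1600 + Real.exp (9 * (1 - (R ^ 2)⁻¹)⁻¹) * (1 - R⁻¹)⁻¹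

theorem errorConst_nonneg (hR : 1 < R) : 0 ≤ errorConst R := by
  have hinv : 0 < 1 - R⁻¹ := sub_pos.2 (inv_lt_one_of_one_lt₀ hR)
  rw [errorConst]
  positivity

theorem abs_sum_tsum_eulerCoeff_sub_card_le (hodd : Odd (Fintype.card Fq)) (hR : 1 < R)
    (hR4 : R ^ 4 = Fintype.card Fq) (he1 : |e1| ≤ 1) (he2 : |e2| ≤ 1) (hn : n ≠ 0) :
    |∑ P ∈ primesOfDegree Fq n, ∑' k, eulerCoeff e1 e2 P k - (primesOfDegree Fq n).card| ≤
      errorConst R * ((n : ℝ) ^ 2 * R ^ (2 * n)) := by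
  have hsplit : ∑ P ∈ primesOfDegree Fq n, ∑' k, eulerCoeff e1 e2 P k -
        (primesOfDegree Fq n).card =
      ∑ k ∈ Finset.Ico 1 (4 * n), ∑ P ∈ primesOfDegree Fq n, eulerCoeff e1 e2 P k +
        ∑ P ∈ primesOfDegree Fq n, ∑' k, eulerCoeff e1 e2 P (k + 4 * n) := by
    rw [Finset.sum_comm, ← Finset.sum_add_distrib, Finset.cast_card, ← Finset.sum_sub_distrib]
    refine Finset.sum_congr rfl fun P hP => ?_
    have hsum := (summable_abs_eulerCoeff hodd hR hR4 he1 he2 (mem_primesOfDegree.1 hP).2.1).of_abs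
    rw [← hsum.sum_add_tsum_nat_add (4 * n), Finset.range_eq_Ico,
      Finset.sum_eq_sum_Ico_succ_bot (by lia), eulerCoeff_zero]
    ring
  rw [hsplit, errorConst, add_mul]
  exact (abs_add_le _ _).trans (add_le_add
    (abs_sum_Ico_sum_eulerCoeff_le hodd (by positivity) hR4 he1 he2 hn)
    (abs_sum_tsum_eulerCoeff_add_le hodd hR hR4 he1 he2 n))

theorem setOf_monic_irreducible_natDegree_eq (Fq : Type*) [Field Fq] [Fintype Fq] (n : ℕ) :
    {P : Fq[X] | P.Monic ∧ Irreducible P ∧ P.natDegree = n} = primesOfDegree Fq n :=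
  Set.ext fun _ => mem_primesOfDegree.symm

theorem setOf_monic_irreducible_natDegree_le (Fq : Type*) [Field Fq] [Fintype Fq] (N : ℕ) :
    {Q : Fq[X] | Q.Monic ∧ Irreducible Q ∧ Q.natDegree ≤ N} = primesUpTo Fq N :=
  Set.ext fun _ => mem_primesUpTo.symm

theorem piq_eq_card_primesOfDegree (Fq : Type*) [Field Fq] [Fintype Fq] (n : ℕ) :
    piq Fq n = (primesOfDegree Fq n).card := by
  rw [piq, setOf_monic_irreducible_natDegree_eq, Set.ncard_coe_finset]

theorem abs_finsum_sub_piq_mul_le (hodd : Odd (Fintype.card Fq)) (hR : 1 < R)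
    (hR4 : R ^ 4 = Fintype.card Fq) (he1 : |e1| ≤ 1) (he2 : |e2| ≤ 1) {A : Fq[X] → ℝ}
    (hA : ∀ P : Fq[X], P.Monic → Irreducible P →
      Filter.Tendsto
        (fun M : ℕ => ∏ᶠ Q ∈ {Q : Fq[X] | Q.Monic ∧ Irreducible Q ∧ Q.natDegree ≤ M},
          (1 + deltaP (Fintype.card Fq) e1 e2 P Q))
        Filter.atTop (nhds (A P))) (hn : n ≠ 0) :
    |(∑ᶠ P ∈ {P : Fq[X] | P.Monic ∧ Irreducible P ∧ P.natDegree = n}, A P) -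
        piq Fq n * (1 - 1 / (Fintype.card Fq : ℝ))| ≤
      errorConst R * ((n : ℝ) ^ 2 * R ^ (2 * n)) := by
  have hcard : (1 : ℝ) < Fintype.card Fq := by exact_mod_cast Fintype.one_lt_card
  have hvalue : ∀ P ∈ primesOfDegree Fq n,
      A P = (1 - (Fintype.card Fq : ℝ)⁻¹) * ∑' k, eulerCoeff e1 e2 P k := fun P hP => by
    obtain ⟨hmonic, hP, -⟩ := mem_primesOfDegree.1 hP
    refine eq_mul_tsum_eulerCoeff hodd he1 he2 (summable_abs_eulerCoeff hodd hR hR4 he1 he2 hP) ?_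
    simpa only [setOf_monic_irreducible_natDegree_le, finprod_mem_coe_finset] using hA P hmonic hP
  have hfactor : |1 - (Fintype.card Fq : ℝ)⁻¹| ≤ 1 := by
    rw [abs_of_pos (sub_pos.2 (inv_lt_one_of_one_lt₀ hcard))]
    exact sub_le_self _ (by positivity)
  rw [setOf_monic_irreducible_natDegree_eq, finsum_mem_coe_finset, piq_eq_card_primesOfDegree,
    Finset.sum_congr rfl hvalue, ← Finset.mul_sum, one_div, mul_comm (Nat.cast _), ← mul_sub,
    abs_mul]
  exact (mul_le_of_le_one_left (abs_nonneg _) hfactor).trans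
    (abs_sum_tsum_eulerCoeff_sub_card_le hodd hR hR4 he1 he2 hn)

end Average

section ErrorTerms

variable {R : ℝ} {n M : ℕ}

theorem sq_mul_pow_le_of_le_two_mul (hR : 0 ≤ R) (hn : n ≠ 0) (h : n ≤ 2 * M) :
    (n : ℝ) ^ 2 * R ^ (2 * n) ≤ 8 * (R ^ (2 * n) * (M : ℝ) ^ 3 / n) := by
  have hn_pos : (0 : ℝ) < n := by positivity
  have hle : (n : ℝ) ≤ 2 * M := by exact_mod_cast h
  rw [← mul_div_assoc, le_div_iff₀ hn_pos]
  calc (n : ℝ) ^ 2 * R ^ (2 * n) * n = R ^ (2 * n) * (n : ℝ) ^ 3 := by ring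
    _ ≤ R ^ (2 * n) * (2 * M) ^ 3 := by gcongr
    _ = 8 * (R ^ (2 * n) * (M : ℝ) ^ 3) := by ring

theorem sq_mul_pow_le_of_two_mul_le (hR : 1 ≤ R) (hM : M ≠ 0) (h : 2 * M ≤ n) {K : ℝ}
    (hK : (n : ℝ) ^ 4 ≤ K * R ^ n) :
    (n : ℝ) ^ 2 * R ^ (2 * n) ≤ K * (R ^ (4 * n) / (n * M * R ^ (2 * M))) := by
  have hn_pos : (0 : ℝ) < n := by
    have hn : 0 < n := by lia
    exact_mod_cast hn
  have hle : (M : ℝ) ≤ n := by exact_mod_cast (by lia : M ≤ n)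
  rw [← mul_div_assoc, le_div_iff₀ (by positivity)]
  calc (n : ℝ) ^ 2 * R ^ (2 * n) * (n * M * R ^ (2 * M))
      ≤ (n : ℝ) ^ 2 * R ^ (2 * n) * (n * n * R ^ n) := by gcongr
    _ = (n : ℝ) ^ 4 * R ^ (3 * n) := by ring
    _ ≤ K * R ^ n * R ^ (3 * n) := by gcongr
    _ = K * R ^ (4 * n) := by ring

theorem exists_forall_sq_mul_pow_le (hR : 1 < R) :
    ∃ K : ℝ, 0 ≤ K ∧ ∀ n M : ℕ, n ≠ 0 → M ≠ 0 → (n : ℝ) ^ 2 * R ^ (2 * n) ≤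
      K * (R ^ (2 * n) * (M : ℝ) ^ 3 / n + R ^ (4 * n) / (n * M * R ^ (2 * M))) := by
  obtain ⟨K, hK⟩ := (tendsto_pow_const_div_const_pow_of_one_lt 4 hR).bddAbove_range
  refine ⟨max K 8, by positivity, fun n M hn hM => ?_⟩
  rw [mul_add]
  rcases le_total n (2 * M) with h | h
  · refine le_add_of_le_of_nonneg ?_ (by positivity)
    refine (sq_mul_pow_le_of_le_two_mul (by positivity) hn h).trans ?_
    gcongr
    exact le_max_right _ _
  · refine le_add_of_nonneg_of_le (by positivity) (sq_mul_pow_le_of_two_mul_le hR.le hM h ?_)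
    rw [← div_le_iff₀ (by positivity)]
    exact (hK ⟨n, rfl⟩).trans (le_max_left _ _)

theorem rpow_div_four_eq_pow {q : ℝ} (hR : 0 ≤ R) (hR4 : R ^ 4 = q) (k : ℕ) :
    q ^ ((k : ℝ) / 4) = R ^ k := by
  rw [← hR4, ← Real.rpow_natCast R 4, ← Real.rpow_mul hR, ← Real.rpow_natCast R k]
  congr 1
  push_cast
  ring

theorem exists_forall_sq_mul_pow_le_rpow {q : ℝ} (hR : 1 < R) (hR4 : R ^ 4 = q) :
    ∃ K : ℝ, ∀ n M : ℕ, n ≠ 0 → M ≠ 0 → (n : ℝ) ^ 2 * R ^ (2 * n) ≤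
      K * (q ^ ((n : ℝ) - 2 * (M : ℝ)) / (n : ℝ) + q ^ ((n : ℝ) / 2) * (M : ℝ) ^ 3 / (n : ℝ) +
        q ^ (n : ℝ) / ((n : ℝ) * (M : ℝ) * q ^ ((M : ℝ) / 2))) := by
  have hq : 0 < q := by rw [← hR4]; positivity
  have hR_nonneg : 0 ≤ R := by positivity
  have hhalf (k : ℕ) : q ^ ((k : ℝ) / 2) = R ^ (2 * k) := by
    rw [← rpow_div_four_eq_pow hR_nonneg hR4]
    congr 1
    push_cast
    ring
  have hfull (k : ℕ) : q ^ (k : ℝ) = R ^ (4 * k) := by rw [Real.rpow_natCast, pow_mul, hR4]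
  obtain ⟨K, hK_nonneg, hK⟩ := exists_forall_sq_mul_pow_le hR
  refine ⟨K, fun n M hn hM => (hK n M hn hM).trans ?_⟩
  rw [hhalf, hhalf, hfull, add_assoc]
  refine mul_le_mul_of_nonneg_left (le_add_of_nonneg_left ?_) hK_nonneg
  positivity

end ErrorTerms

theorem exists_one_lt_pow_four_eq {q : ℝ} (hq : 1 < q) : ∃ R : ℝ, 1 < R ∧ R ^ 4 = q :=
  ⟨q ^ (4⁻¹ : ℝ), Real.one_lt_rpow hq (by norm_num),
    Real.rpow_inv_natCast_pow (n := 4) (by positivity) (by norm_num)⟩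

theorem stmt12_general {q : ℕ} (hq_odd : Odd q) (hq : 1 < q) :
    ∃ C : ℝ, ∀ (Fq : Type*) [Field Fq] [Fintype Fq], Fintype.card Fq = q →
      ∀ e1 e2 : ℤ, |e1| ≤ 1 → |e2| ≤ 1 → ∀ A : Fq[X] → ℝ,
      (∀ P : Fq[X], P.Monic → Irreducible P →
        Filter.Tendsto
          (fun M : ℕ => ∏ᶠ Q ∈ {Q : Fq[X] | Q.Monic ∧ Irreducible Q ∧ Q.natDegree ≤ M},
            (1 + deltaP q e1 e2 P Q))
          Filter.atTop (nhds (A P))) →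
      ∀ n M : ℕ, 1 ≤ n → 1 ≤ M →
        |(∑ᶠ P ∈ {P : Fq[X] | P.Monic ∧ Irreducible P ∧ P.natDegree = n}, A P) -
            (piq Fq n : ℝ) * (1 - 1 / (q : ℝ))| ≤
          C * ((q : ℝ) ^ ((n : ℝ) - 2 * (M : ℝ)) / (n : ℝ) +
            (q : ℝ) ^ ((n : ℝ) / 2) * (M : ℝ) ^ 3 / (n : ℝ) +
            (q : ℝ) ^ (n : ℝ) / ((n : ℝ) * (M : ℝ) * (q : ℝ) ^ ((M : ℝ) / 2))) := by
  obtain ⟨R, hR, hR4⟩ := exists_one_lt_pow_four_eq (q := q) (by exact_mod_cast hq)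
  obtain ⟨K, hK⟩ := exists_forall_sq_mul_pow_le_rpow hR hR4
  refine ⟨errorConst R * K, ?_⟩
  rintro Fq _ _ rfl e1 e2 he1 he2 A hA n M hn hM
  refine (abs_finsum_sub_piq_mul_le hq_odd hR hR4 he1 he2 hA (by lia)).trans ?_
  rw [mul_assoc]
  exact mul_le_mul_of_nonneg_left (hK n M (by lia) (by lia)) (errorConst_nonneg hR)

/-- if `A_P` denotes the limit of the partial products
`∏_{deg Q ≤ M} (1 + δ_P(Q))`, then there is a constant `C` depending only on `q` such
that for all `n, M ≥ 1`,
`|∑_{deg P = n} A_P - π_q(n)·(1 - 1/q)| ≤ C·(q^{n-2M}/n + q^{n/2}·M³/n + q^n/(n·M·q^{M/2}))`. -/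
theorem stmt12 (q : ℕ) (hq_odd : Odd q) (hq_pp : IsPrimePow q)
    (e1 e2 : ℤ) (he1 : e1 = 1 ∨ e1 = -1) (he2 : e2 = 1 ∨ e2 = -1)
    (Fq : Type) [Field Fq] [Fintype Fq] (hFq : Fintype.card Fq = q)
    (A : Fq[X] → ℝ)
    (hA : ∀ P : Fq[X], P.Monic → Irreducible P →
      Filter.Tendsto
        (fun M : ℕ => ∏ᶠ Q ∈ {Q : Fq[X] | Q.Monic ∧ Irreducible Q ∧ Q.natDegree ≤ M},
          (1 + deltaP q e1 e2 P Q))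
        Filter.atTop (nhds (A P))) :
    ∃ C : ℝ, ∀ n M : ℕ, 1 ≤ n → 1 ≤ M →
      |(∑ᶠ P ∈ {P : Fq[X] | P.Monic ∧ Irreducible P ∧ P.natDegree = n}, A P) -
          (piq Fq n : ℝ) * (1 - 1 / (q : ℝ))| ≤
        C * ((q : ℝ) ^ ((n : ℝ) - 2 * (M : ℝ)) / (n : ℝ) +
          (q : ℝ) ^ ((n : ℝ) / 2) * (M : ℝ) ^ 3 / (n : ℝ) +
          (q : ℝ) ^ (n : ℝ) / ((n : ℝ) * (M : ℝ) * (q : ℝ) ^ ((M : ℝ) / 2))) := by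
  obtain ⟨C, hC⟩ := stmt12_general hq_odd hq_pp.one_lt
  exact ⟨C, hC Fq hFq e1 e2 (by grind) (by grind) A hA⟩
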